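/- Let E(x) = S(x) − (π²/2)x. Then liminf_{x→∞} E(x)/x^{1/2} = −∞; that is, for every real C there exist arbitrarily large x with E(x) < −C·x^{1/2}. -/

import Mathlib

open Real

/-- `r₂(m)`: the number of representations of `m` as a sum of two squares of integers. -/
noncomputable def r2 (m : ℕ) : ℕ :=
  Set.ncard {p : ℤ × ℤ | p.1 ^ 2 + p.2 ^ 2 = (m : ℤ)}

/-- `S(x)`: the number of integer points `(a,b,w)` with `(a²+b²)² + w² < x`. -/
noncomputable def S (x : ℝ) : ℕ :=
  Set.ncard {p : ℤ × ℤ × ℤ |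
    (((p.1 : ℝ) ^ 2 + (p.2.1 : ℝ) ^ 2) ^ 2 + (p.2.2 : ℝ) ^ 2) < x}

/-- `E(x) = S(x) - (π²/2)·x`. -/
noncomputable def E (x : ℝ) : ℝ := (S x : ℝ) - (Real.pi ^ 2 / 2) * x

/-- squared norm of a lattice point -/
noncomputable def qf (v : ℤ × ℤ) : ℝ := (v.1 : ℝ) ^ 2 + (v.2 : ℝ) ^ 2

lemma qf_nonneg (v : ℤ × ℤ) : 0 ≤ qf v := by unfold qf; positivity

section PartA
open MeasureTheory Set

lemma A_exp (s : ℝ) (hs : 0 < s) (c : ℝ) (hc : 0 ≤ c) :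
    ENNReal.ofReal (exp (-c)) =
      ∫⁻ T in Ioi (0 : ℝ), (if c < s * T then ENNReal.ofReal (s * exp (-(s * T))) else 0) := by
  have h1 : ∫ x in Ioi (c / s), s * rexp (-(s * x)) = exp (-c) := by
    have := integral_exp_mul_Ioi (a := -s) (by linarith) (c / s)
    rw [integral_const_mul]
    simp only [neg_mul] at this
    rw [this]
    field_simp
  have h2 : IntegrableOn (fun x => s * rexp (-(s * x))) (Ioi (c / s)) := by
    have := integrableOn_exp_mul_Ioi (a := -s) (by linarith) (c / s)
    simp only [neg_mul] at this
    exact this.const_mul s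
  rw [← h1, ofReal_integral_eq_lintegral_ofReal h2 (Filter.Eventually.of_forall fun x => by positivity)]
  rw [← lintegral_indicator measurableSet_Ioi, ← lintegral_indicator measurableSet_Ioi]
  congr 1
  ext T
  simp only [indicator, mem_Ioi]
  have h3 : c / s < T ↔ c < s * T := by rw [div_lt_iff₀ hs, mul_comm]
  simp only [h3]
  by_cases h : c < s * T
  · have : 0 < T := by
      by_contra h'
      push Not at h'
      nlinarith
    simp [h, this]
  · simp [h]

lemma A_vol (s : ℝ) (hs : 0 < s) (c : ℝ) (hc : 0 ≤ c) (T : ℝ) (hT : 0 < T) :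
    ∫⁻ l in Ioi (0 : ℝ), (if l * s ^ 2 + c / (4 * l) < s * T
        then ENNReal.ofReal (s * exp (-(s * T))) else 0) =
      ENNReal.ofReal (exp (-(s * T)) * √(T ^ 2 - c)) := by
  set r := √(T ^ 2 - c) with hr
  have hrT : r ≤ T := by
    rw [hr]; apply Real.sqrt_le_iff.2; constructor <;> nlinarith
  have hr0 : 0 ≤ r := Real.sqrt_nonneg _
  have key : ∀ l : ℝ, (0 < l ∧ l * s ^ 2 + c / (4 * l) < s * T) ↔
      l ∈ Ioo ((T - r) / (2 * s)) ((T + r) / (2 * s)) := by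
    intro l
    have e1 : l ∈ Ioo ((T - r) / (2 * s)) ((T + r) / (2 * s)) ↔ |2 * s * l - T| < r := by
      rw [abs_lt, mem_Ioo, div_lt_iff₀ (by positivity), lt_div_iff₀ (by positivity)]
      constructor <;> rintro ⟨h1, h2⟩ <;> constructor <;> linarith
    rw [e1, hr, Real.lt_sqrt (abs_nonneg _), sq_abs]
    constructor
    · rintro ⟨hl, h⟩
      have : l * s ^ 2 + c / (4 * l) = (4 * l ^ 2 * s ^ 2 + c) / (4 * l) := by field_simp
      rw [this, div_lt_iff₀ (by positivity)] at h
      nlinarith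
    · intro h
      have hl : 0 < l := by
        by_contra h'
        push Not at h'
        have : s * l ≤ 0 := by nlinarith
        nlinarith
      refine ⟨hl, ?_⟩
      have : l * s ^ 2 + c / (4 * l) = (4 * l ^ 2 * s ^ 2 + c) / (4 * l) := by field_simp
      rw [this, div_lt_iff₀ (by positivity)]
      nlinarith
  rw [← lintegral_indicator measurableSet_Ioi]
  have : (indicator (Ioi (0 : ℝ)) fun l => (if l * s ^ 2 + c / (4 * l) < s * T
        then ENNReal.ofReal (s * exp (-(s * T))) else 0)) =
      indicator (Ioo ((T - r) / (2 * s)) ((T + r) / (2 * s)))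
        (fun _ => ENNReal.ofReal (s * exp (-(s * T)))) := by
    ext l
    simp only [indicator, mem_Ioi]
    have := key l
    split_ifs <;> tauto
  rw [this, lintegral_indicator measurableSet_Ioo, setLIntegral_const, Real.volume_Ioo,
    ← ENNReal.ofReal_mul (by positivity)]
  congr 1
  field_simp
  ring

lemma A_one (s : ℝ) (hs : 0 < s) (c : ℝ) (hc : 0 ≤ c) :
    ∫⁻ l in Ioi (0 : ℝ), ENNReal.ofReal (exp (-(l * s ^ 2 + c / (4 * l)))) =
      ∫⁻ T in Ioi (0 : ℝ), ENNReal.ofReal (exp (-(s * T)) * √(T ^ 2 - c)) := by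
  have h1 : ∫⁻ l in Ioi (0 : ℝ), ENNReal.ofReal (exp (-(l * s ^ 2 + c / (4 * l)))) =
      ∫⁻ l in Ioi (0 : ℝ), ∫⁻ T in Ioi (0 : ℝ), (if l * s ^ 2 + c / (4 * l) < s * T
        then ENNReal.ofReal (s * exp (-(s * T))) else 0) := by
    refine setLIntegral_congr_fun measurableSet_Ioi fun l hl => ?_
    have hl' : 0 < l := hl
    exact A_exp s hs _ (by positivity)
  rw [h1, lintegral_lintegral_swap]
  · refine setLIntegral_congr_fun measurableSet_Ioi fun T hT => ?_
    exact A_vol s hs c hc T hT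
  · apply Measurable.aemeasurable
    apply Measurable.ite
    · exact measurableSet_lt (by fun_prop) (by fun_prop)
    · fun_prop
    · fun_prop

lemma summable_exp_sq (c : ℝ) (hc : 0 < c) : Summable fun n : ℤ => exp (-(c * (n : ℝ) ^ 2)) := by
  have h : Summable fun n : ℕ => exp (-(c * (n : ℝ) ^ 2)) := by
    refine Summable.of_nonneg_of_le (fun n => (exp_pos _).le) (fun n => ?_)
      ((Real.summable_exp_nat_mul_iff (a := -c)).2 (by linarith))
    apply exp_le_exp.2
    have : (n : ℝ) ≤ (n : ℝ) ^ 2 := by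
      exact_mod_cast Nat.le_self_pow two_ne_zero n
    nlinarith
  refine Summable.of_nat_of_neg ?_ ?_
  · simpa using h
  · simpa using h

lemma theta_one (l : ℝ) (hl : 0 < l) :
    ∑' n : ℤ, ENNReal.ofReal (exp (-((n : ℝ) ^ 2 / (4 * l)))) =
      ENNReal.ofReal (√(4 * π * l)) *
        ∑' n : ℤ, ENNReal.ofReal (exp (-(4 * π ^ 2 * l * (n : ℝ) ^ 2))) := by
  have h := Real.tsum_exp_neg_mul_int_sq (a := 1 / (4 * π * l)) (by positivity)
  have e1 : ∀ n : ℤ, -π * (1 / (4 * π * l)) * (n : ℝ) ^ 2 = -((n : ℝ) ^ 2 / (4 * l)) := by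
    intro n; field_simp
  have e2 : ∀ n : ℤ, -π / (1 / (4 * π * l)) * (n : ℝ) ^ 2 = -(4 * π ^ 2 * l * (n : ℝ) ^ 2) := by
    intro n; field_simp
  simp only [e1, e2] at h
  rw [← ENNReal.ofReal_tsum_of_nonneg (fun _ => (exp_pos _).le),
    ← ENNReal.ofReal_tsum_of_nonneg (fun _ => (exp_pos _).le),
    ← ENNReal.ofReal_mul (by positivity), h]
  · congr 2
    rw [← Real.sqrt_eq_rpow, one_div (4 * π * l), Real.sqrt_inv]
    simp
  · exact summable_exp_sq _ (by positivity)
  · have := summable_exp_sq (1 / (4 * l)) (by positivity)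
    refine this.congr fun n => ?_
    congr 1; field_simp

lemma theta_two (l : ℝ) (hl : 0 < l) :
    ∑' v : ℤ × ℤ, ENNReal.ofReal (exp (-(qf v / (4 * l)))) =
      ENNReal.ofReal (4 * π * l) *
        ∑' v : ℤ × ℤ, ENNReal.ofReal (exp (-(4 * π ^ 2 * l * qf v))) := by
  have e (f : ℤ → ENNReal) : ∑' v : ℤ × ℤ, f v.1 * f v.2 = (∑' n, f n) * ∑' n, f n := by
    rw [ENNReal.tsum_prod (f := fun a b => f a * f b)]
    simp_rw [ENNReal.tsum_mul_left, ENNReal.tsum_mul_right]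
  have e1 : ∀ v : ℤ × ℤ, ENNReal.ofReal (exp (-(qf v / (4 * l)))) =
      ENNReal.ofReal (exp (-((v.1 : ℝ) ^ 2 / (4 * l)))) *
      ENNReal.ofReal (exp (-((v.2 : ℝ) ^ 2 / (4 * l)))) := by
    intro v
    rw [← ENNReal.ofReal_mul (exp_pos _).le, ← exp_add]
    congr 2; unfold qf; ring
  have e2 : ∀ v : ℤ × ℤ, ENNReal.ofReal (exp (-(4 * π ^ 2 * l * qf v))) =
      ENNReal.ofReal (exp (-(4 * π ^ 2 * l * (v.1 : ℝ) ^ 2))) *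
      ENNReal.ofReal (exp (-(4 * π ^ 2 * l * (v.2 : ℝ) ^ 2))) := by
    intro v
    rw [← ENNReal.ofReal_mul (exp_pos _).le, ← exp_add]
    congr 2; unfold qf; ring
  simp_rw [e1, e2]
  rw [e (fun n : ℤ => ENNReal.ofReal (exp (-((n : ℝ) ^ 2 / (4 * l))))),
    e (fun n : ℤ => ENNReal.ofReal (exp (-(4 * π ^ 2 * l * (n : ℝ) ^ 2)))), theta_one l hl]
  have : ENNReal.ofReal (4 * π * l) = ENNReal.ofReal (√(4 * π * l)) * ENNReal.ofReal (√(4 * π * l)) := by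
    rw [← ENNReal.ofReal_mul (Real.sqrt_nonneg _), Real.mul_self_sqrt (by positivity)]
  rw [this]; ring

lemma A_gamma (r : ℝ) (hr : 0 < r) :
    ∫⁻ l in Ioi (0 : ℝ), ENNReal.ofReal (4 * π * l * exp (-(r * l))) =
      ENNReal.ofReal (4 * π / r ^ 2) := by
  have h := integral_rpow_mul_exp_neg_mul_Ioi (a := 2) (r := r) (by norm_num) hr
  have h2 : ∫ l in Ioi (0 : ℝ), l * exp (-(r * l)) = 1 / r ^ 2 := by
    have e : (2 : ℝ) - 1 = 1 := by norm_num
    rw [e] at h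
    simp only [rpow_one] at h
    rw [h, Real.Gamma_two]; norm_num
  have hI : IntegrableOn (fun l => l * exp (-(r * l))) (Ioi (0 : ℝ)) := by
    apply Integrable.of_integral_ne_zero
    rw [h2]; positivity
  have h3 : ∫ l in Ioi (0 : ℝ), 4 * π * l * exp (-(r * l)) = 4 * π / r ^ 2 := by
    simp_rw [mul_assoc (4 * π)]
    rw [integral_const_mul, h2]; ring
  rw [← h3, ofReal_integral_eq_lintegral_ofReal]
  · simp_rw [mul_assoc (4 * π)]
    exact hI.const_mul _
  · refine (ae_restrict_iff' measurableSet_Ioi).2 (Filter.Eventually.of_forall fun l hl => ?_)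
    have : 0 < l := hl
    simp only [Pi.zero_apply]
    positivity

lemma A_main (s : ℝ) (hs : 0 < s) :
    ∫⁻ T in Ioi (0 : ℝ), ∑' v : ℤ × ℤ, ENNReal.ofReal (exp (-(s * T)) * √(T ^ 2 - qf v)) =
      ∑' v : ℤ × ℤ, ENNReal.ofReal (4 * π / (s ^ 2 + 4 * π ^ 2 * qf v) ^ 2) := by
  rw [lintegral_tsum (fun v => by fun_prop)]
  have h1 : ∀ v : ℤ × ℤ, ∫⁻ T in Ioi (0 : ℝ), ENNReal.ofReal (exp (-(s * T)) * √(T ^ 2 - qf v)) =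
      ∫⁻ l in Ioi (0 : ℝ), ENNReal.ofReal (exp (-(l * s ^ 2 + qf v / (4 * l)))) :=
    fun v => (A_one s hs _ (qf_nonneg v)).symm
  simp_rw [h1]
  rw [← lintegral_tsum (fun v => by fun_prop)]
  have h2 : ∀ v : ℤ × ℤ, ENNReal.ofReal (4 * π / (s ^ 2 + 4 * π ^ 2 * qf v) ^ 2) =
      ∫⁻ l in Ioi (0 : ℝ), ENNReal.ofReal (4 * π * l * exp (-((s ^ 2 + 4 * π ^ 2 * qf v) * l))) := by
    intro v
    have := qf_nonneg v
    rw [A_gamma _ (by positivity)]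
  simp_rw [h2]
  rw [← lintegral_tsum (fun v => by fun_prop)]
  refine setLIntegral_congr_fun measurableSet_Ioi fun l hl => ?_
  have hl' : 0 < l := hl
  have e1 : ∀ v : ℤ × ℤ, ENNReal.ofReal (exp (-(l * s ^ 2 + qf v / (4 * l)))) =
      ENNReal.ofReal (exp (-(l * s ^ 2))) * ENNReal.ofReal (exp (-(qf v / (4 * l)))) := by
    intro v
    rw [← ENNReal.ofReal_mul (exp_pos _).le, ← exp_add]
    congr 2; ring
  have e2 : ∀ v : ℤ × ℤ, ENNReal.ofReal (4 * π * l * exp (-((s ^ 2 + 4 * π ^ 2 * qf v) * l))) =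
      ENNReal.ofReal (exp (-(l * s ^ 2))) * (ENNReal.ofReal (4 * π * l) *
        ENNReal.ofReal (exp (-(4 * π ^ 2 * l * qf v)))) := by
    intro v
    rw [← ENNReal.ofReal_mul (by positivity), ← ENNReal.ofReal_mul (exp_pos _).le, mul_left_comm,
      ← exp_add]
    congr 3; ring
  simp only [e1, e2]
  rw [ENNReal.tsum_mul_left, theta_two l hl', ENNReal.tsum_mul_left, ENNReal.tsum_mul_left]

end PartA

section PartB
open MeasureTheory Set

lemma finite_qf_lt (y : ℝ) : {v : ℤ × ℤ | qf v < y}.Finite := by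
  set n : ℤ := ⌈|y|⌉
  refine ((Set.finite_Icc (-n) n).prod (Set.finite_Icc (-n) n)).subset ?_
  have hn : |y| ≤ n := Int.le_ceil _
  have aux : ∀ a : ℤ, (a : ℝ) ^ 2 < y → a ∈ Icc (-n) n := by
    intro a ha
    have h1 : ((|a| : ℤ) : ℝ) ≤ (a : ℝ) ^ 2 := by
      have : |a| ≤ a ^ 2 := by
        rw [← sq_abs]; nlinarith [Int.le_self_sq |a|]
      exact_mod_cast this
    have h2 : ((|a| : ℤ) : ℝ) ≤ n := by linarith [le_abs_self y]
    have h3 : |a| ≤ n := by exact_mod_cast h2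
    exact abs_le.1 h3
  rintro ⟨a, b⟩ h
  simp only [mem_ofPred_eq, qf] at h
  exact ⟨aux a (by nlinarith [sq_nonneg (b : ℝ)]), aux b (by nlinarith [sq_nonneg (a : ℝ)])⟩

/-- the sum of the sqrt -/
noncomputable def Gf (T : ℝ) : ℝ := ∑' v : ℤ × ℤ, √(T ^ 2 - qf v)

lemma summable_Gf (T : ℝ) : Summable fun v : ℤ × ℤ => √(T ^ 2 - qf v) := by
  apply summable_of_hasFiniteSupport
  refine (finite_qf_lt (T ^ 2)).subset fun v hv => ?_
  by_contra h
  apply hv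
  simp only [mem_ofPred_eq, not_lt] at h
  exact Real.sqrt_eq_zero_of_nonpos (by linarith)

lemma ofReal_Gf (T : ℝ) : ENNReal.ofReal (Gf T) = ∑' v : ℤ × ℤ, ENNReal.ofReal √(T ^ 2 - qf v) :=
  ENNReal.ofReal_tsum_of_nonneg (fun _ => Real.sqrt_nonneg _) (summable_Gf T)

lemma Gf_nonneg (T : ℝ) : 0 ≤ Gf T := tsum_nonneg fun _ => Real.sqrt_nonneg _

lemma measurable_Gf : Measurable Gf := by
  have : Gf = fun T => (∑' v : ℤ × ℤ, ENNReal.ofReal √(T ^ 2 - qf v)).toReal := by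
    ext T
    rw [← ofReal_Gf, ENNReal.toReal_ofReal (Gf_nonneg T)]
  rw [this]
  apply Measurable.ennreal_toReal
  apply Measurable.tsum
  intro v
  fun_prop

lemma summable_base : Summable fun v : ℤ × ℤ => 1 / (1 + qf v) ^ 2 := by
  have h1 : Summable fun n : ℤ => 1 / (1 + (n : ℝ) ^ 2) := by
    have h := (Real.summable_one_div_int_pow (p := 2)).2 (by norm_num)
    have h2 : Summable fun n : ℤ => if n = 0 then (1 : ℝ) else 0 :=
      summable_of_hasFiniteSupport ((Set.finite_singleton (0 : ℤ)).subset fun n hn => by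
        by_contra h'; apply hn; simp at h'; simp [h'])
    refine Summable.of_nonneg_of_le (fun n => by positivity) (fun n => ?_) (h.add h2)
    by_cases hn : n = 0
    · simp [hn]
    · simp only [hn, if_false, add_zero]
      have : (n : ℝ) ≠ 0 := by exact_mod_cast hn
      apply one_div_le_one_div_of_le (by positivity) (by linarith)
  have h3 := h1.mul_of_nonneg h1 (fun n => by positivity) (fun n => by positivity)
  refine Summable.of_nonneg_of_le (fun v => ?_) (fun v => ?_) h3
  · have := qf_nonneg v; positivity
  · rw [one_div_mul_one_div]
    apply one_div_le_one_div_of_le (by positivity)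
    unfold qf
    nlinarith [sq_nonneg (v.1 : ℝ), sq_nonneg (v.2 : ℝ), mul_nonneg (sq_nonneg (v.1 : ℝ)) (sq_nonneg (v.2 : ℝ))]

lemma qf_ge_one (v : ℤ × ℤ) (hv : v ≠ 0) : 1 ≤ qf v := by
  have h : 1 ≤ v.1 ^ 2 + v.2 ^ 2 := by
    by_contra h
    push Not at h
    have h1 : v.1 ^ 2 = 0 := by nlinarith [sq_nonneg v.1, sq_nonneg v.2]
    have h2 : v.2 ^ 2 = 0 := by nlinarith [sq_nonneg v.1, sq_nonneg v.2]
    apply hv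
    ext
    · simpa using h1
    · simpa using h2
  unfold qf
  exact_mod_cast h

lemma qf_zero : qf 0 = 0 := by simp [qf]

lemma summable_real (s : ℝ) (hs : 0 < s) :
    Summable fun v : ℤ × ℤ => 4 * π / (s ^ 2 + 4 * π ^ 2 * qf v) ^ 2 := by
  set m := min (s ^ 2) 1
  have hm : 0 < m := lt_min (by positivity) one_pos
  refine Summable.of_nonneg_of_le (fun v => ?_) (fun v => ?_) (summable_base.mul_left (4 * π / m ^ 2))
  · have := qf_nonneg v; positivity
  · have hq := qf_nonneg v
    rw [div_mul_div_comm, mul_one, ← mul_pow]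
    gcongr
    have h1 : m ≤ s ^ 2 := min_le_left _ _
    have h2 : m ≤ 1 := min_le_right _ _
    have h3 : 1 ≤ 4 * π ^ 2 := by nlinarith [pi_gt_three]
    nlinarith

/-- the density -/
noncomputable def hf (C T : ℝ) : ℝ := Gf T - 2 * π / 3 * T ^ 3 + C * T

lemma int_Gf (s : ℝ) (hs : 0 < s) :
    IntegrableOn (fun T => exp (-(s * T)) * Gf T) (Ioi 0) ∧
    ∫ T in Ioi (0 : ℝ), exp (-(s * T)) * Gf T =
      ∑' v : ℤ × ℤ, 4 * π / (s ^ 2 + 4 * π ^ 2 * qf v) ^ 2 := by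
  have h0 : ∀ v : ℤ × ℤ, 0 ≤ 4 * π / (s ^ 2 + 4 * π ^ 2 * qf v) ^ 2 := by
    intro v; have := qf_nonneg v; positivity
  have hl : ∫⁻ T in Ioi (0 : ℝ), ENNReal.ofReal (exp (-(s * T)) * Gf T) =
      ENNReal.ofReal (∑' v : ℤ × ℤ, 4 * π / (s ^ 2 + 4 * π ^ 2 * qf v) ^ 2) := by
    rw [ENNReal.ofReal_tsum_of_nonneg h0 (summable_real s hs), ← A_main s hs]
    refine lintegral_congr fun T => ?_
    rw [ENNReal.ofReal_mul (exp_pos _).le, ofReal_Gf, ← ENNReal.tsum_mul_left]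
    refine tsum_congr fun v => ?_
    rw [ENNReal.ofReal_mul (exp_pos _).le]
  have hm : Measurable fun T => exp (-(s * T)) * Gf T :=
    Measurable.mul (by fun_prop) measurable_Gf
  have hnn : ∀ T, 0 ≤ exp (-(s * T)) * Gf T := fun T => mul_nonneg (exp_pos _).le (Gf_nonneg T)
  constructor
  · refine ⟨hm.aestronglyMeasurable, ?_⟩
    rw [hasFiniteIntegral_iff_ofReal (Filter.Eventually.of_forall hnn), hl]
    exact ENNReal.ofReal_lt_top
  · rw [integral_eq_lintegral_of_nonneg_ae (Filter.Eventually.of_forall hnn) hm.aestronglyMeasurable, hl,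
      ENNReal.toReal_ofReal (tsum_nonneg h0)]

lemma int_pow (s : ℝ) (hs : 0 < s) (n : ℕ) :
    IntegrableOn (fun T => exp (-(s * T)) * T ^ n) (Ioi 0) ∧
    ∫ T in Ioi (0 : ℝ), exp (-(s * T)) * T ^ n = (n.factorial : ℝ) / s ^ (n + 1) := by
  have h := integral_rpow_mul_exp_neg_mul_Ioi (a := n + 1) (r := s) (by positivity) hs
  have h2 : ∫ T in Ioi (0 : ℝ), exp (-(s * T)) * T ^ n = (n.factorial : ℝ) / s ^ (n + 1) := by
    simp only [add_sub_cancel_right, rpow_natCast] at h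
    simp_rw [mul_comm (rexp _)]
    rw [h, Real.Gamma_nat_eq_factorial]
    have : ((n : ℝ) + 1) = ((n + 1 : ℕ) : ℝ) := by push_cast; rfl
    rw [this, rpow_natCast, one_div, inv_pow]
    field_simp
  refine ⟨?_, h2⟩
  apply Integrable.of_integral_ne_zero
  rw [h2]
  positivity

/-- the transform, complex -/
noncomputable def tm (v : ℤ × ℤ) (s : ℂ) : ℂ :=
  if v = 0 then 0 else 4 * π / (s ^ 2 + 4 * π ^ 2 * qf v) ^ 2

noncomputable def Hc (C : ℝ) (s : ℂ) : ℂ := ∑' v : ℤ × ℤ, tm v s + C / s ^ 2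

lemma int_hf (C s : ℝ) (hs : 0 < s) :
    IntegrableOn (fun T => exp (-(s * T)) * hf C T) (Ioi 0) ∧
    ((∫ T in Ioi (0 : ℝ), exp (-(s * T)) * hf C T : ℝ) : ℂ) = Hc C s := by
  obtain ⟨i1, e1⟩ := int_Gf s hs
  obtain ⟨i2, e2⟩ := int_pow s hs 3
  obtain ⟨i3, e3⟩ := int_pow s hs 1
  have e : (fun T => exp (-(s * T)) * hf C T) = fun T =>
      (exp (-(s * T)) * Gf T - 2 * π / 3 * (exp (-(s * T)) * T ^ 3)) +
        C * (exp (-(s * T)) * T ^ 1) := by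
    ext T; unfold hf; ring
  rw [e]
  have i12 : Integrable (fun T => exp (-(s * T)) * Gf T - 2 * π / 3 * (exp (-(s * T)) * T ^ 3))
      (volume.restrict (Ioi 0)) := Integrable.sub i1 (Integrable.const_mul i2 (2 * π / 3))
  constructor
  · exact Integrable.add i12 (Integrable.const_mul i3 C)
  · rw [integral_add i12 (Integrable.const_mul i3 C), integral_sub i1 (Integrable.const_mul i2 _),
      integral_const_mul, integral_const_mul, e1, e2, e3]
    have hsum := (summable_real s hs).tsum_eq_add_tsum_ite (0 : ℤ × ℤ)
    rw [hsum, qf_zero]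
    unfold Hc
    have : ∀ v : ℤ × ℤ, tm v (s : ℂ) =
        ((if v = 0 then 0 else 4 * π / (s ^ 2 + 4 * π ^ 2 * qf v) ^ 2 : ℝ) : ℂ) := by
      intro v; unfold tm; split_ifs <;> push_cast <;> rfl
    simp_rw [this]
    rw [← Complex.ofReal_tsum]
    have h3 : (4 * π / (s ^ 2 + 4 * π ^ 2 * 0) ^ 2 : ℝ) = 2 * π / 3 * (6 / s ^ 4) := by
      field_simp; ring
    rw [h3]
    norm_num [Nat.factorial]
    ring

lemma norm_lower (σ M : ℝ) (hσ : 0 < σ) (s : ℂ) (h1 : σ ≤ s.re) (h2 : ‖s‖ ≤ M) (v : ℤ × ℤ) :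
    σ ^ 2 * (1 + qf v) ≤ (1 + M + σ) ^ 2 * ‖s ^ 2 + 4 * π ^ 2 * qf v‖ := by
  have hq := qf_nonneg v
  set a : ℝ := 2 * π * √(qf v)
  have ha : 0 ≤ a := by positivity
  have ha2 : a ^ 2 = 4 * π ^ 2 * qf v := by
    simp only [a, mul_pow, Real.sq_sqrt hq]; ring
  have hM : 0 ≤ M := (norm_nonneg s).trans h2
  have hfac : s ^ 2 + 4 * π ^ 2 * qf v = (s + a * Complex.I) * (s - a * Complex.I) := by
    have : (4 * π ^ 2 * qf v : ℂ) = (a : ℂ) ^ 2 := by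
      have := congrArg (fun x : ℝ => (x : ℂ)) ha2
      push_cast at this
      exact this.symm
    rw [this]
    ring_nf
    rw [Complex.I_sq]; ring
  have hd : ∀ w : ℂ, w.re = s.re → a - M ≤ ‖w‖ → σ * (1 + a) ≤ (1 + M + σ) * ‖w‖ := by
    intro w hw hw2
    have : σ ≤ ‖w‖ := h1.trans (hw ▸ Complex.re_le_norm w)
    nlinarith
  have hna : ‖(a * Complex.I : ℂ)‖ = a := by simp [abs_of_nonneg ha]
  have d1 := hd (s + a * Complex.I) (by simp) (by
    have := norm_sub_le (s + a * Complex.I) s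
    rw [add_sub_cancel_left, hna] at this; linarith)
  have d2 := hd (s - a * Complex.I) (by simp) (by
    have := norm_sub_le s (s - a * Complex.I)
    rw [sub_sub_cancel, hna] at this; linarith)
  rw [hfac, norm_mul]
  have h3 : 1 + qf v ≤ (1 + a) ^ 2 := by
    have : 1 ≤ 4 * π ^ 2 := by nlinarith [pi_gt_three]
    nlinarith
  have h4 : 0 ≤ σ * (1 + a) := by positivity
  calc σ ^ 2 * (1 + qf v) ≤ σ ^ 2 * (1 + a) ^ 2 := by gcongr
    _ = (σ * (1 + a)) * (σ * (1 + a)) := by ring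
    _ ≤ ((1 + M + σ) * ‖s + a * Complex.I‖) * ((1 + M + σ) * ‖s - a * Complex.I‖) := by gcongr
    _ = _ := by ring

lemma den_ne (s : ℂ) (h1 : 0 < s.re) (v : ℤ × ℤ) : s ^ 2 + 4 * π ^ 2 * qf v ≠ 0 := by
  have := norm_lower s.re ‖s‖ h1 s le_rfl le_rfl v
  intro h
  rw [h, norm_zero, mul_zero] at this
  have hq := qf_nonneg v
  have : 0 < s.re ^ 2 * (1 + qf v) := by positivity
  linarith

lemma diff_Hc (C : ℝ) : DifferentiableOn ℂ (Hc C) {s : ℂ | 0 < s.re} := by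
  intro s0 hs0
  have hs0' : 0 < s0.re := hs0
  set σ := s0.re / 2
  set M := ‖s0‖ + 1
  have hσ : 0 < σ := by positivity
  set U : Set ℂ := {s : ℂ | σ < s.re} ∩ Metric.ball s0 1
  have hU : IsOpen U := (isOpen_lt continuous_const Complex.continuous_re).inter Metric.isOpen_ball
  have hs0U : s0 ∈ U := ⟨by simp only [mem_ofPred_eq, σ]; linarith, Metric.mem_ball_self one_pos⟩
  have hd : DifferentiableOn ℂ (fun s => ∑' v : ℤ × ℤ, tm v s) U := by
    refine Complex.differentiableOn_tsum_of_summable_norm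
      (summable_base.mul_left (4 * π * ((1 + M + σ) ^ 2 / σ ^ 2) ^ 2)) ?_ hU ?_
    · intro v s hs
      have hsr : 0 < s.re := hσ.trans hs.1
      apply DifferentiableAt.differentiableWithinAt
      unfold tm
      split_ifs
      · fun_prop
      · have := den_ne s hsr v
        fun_prop (disch := exact pow_ne_zero 2 this)
    · intro v s hs
      have hq := qf_nonneg v
      have hsr : 0 < s.re := hσ.trans hs.1
      have hsM : ‖s‖ ≤ M := by
        have := hs.2
        rw [Metric.mem_ball, dist_eq_norm] at this
        have h := norm_add_le s0 (s - s0)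
        rw [add_sub_cancel] at h
        simp only [M]; linarith
      have hl := norm_lower σ M hσ s hs.1.le hsM v
      unfold tm
      split_ifs
      · rw [norm_zero]; positivity
      · have hn := norm_pos_iff.2 (den_ne s hsr v)
        rw [norm_div, norm_pow]
        have : ‖(4 * π : ℂ)‖ = 4 * π := by simp [abs_of_pos pi_pos]
        rw [this, mul_assoc (4 * π) _ (1 / _), div_eq_mul_one_div, ← one_div_pow, ← one_div_pow,
          ← mul_pow]
        gcongr
        rw [div_mul_div_comm, div_le_div_iff₀ hn (by positivity)]
        linarith
  have h2 : DifferentiableAt ℂ (fun s => ∑' v : ℤ × ℤ, tm v s) s0 :=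
    (hd s0 hs0U).differentiableAt (hU.mem_nhds hs0U)
  apply DifferentiableAt.differentiableWithinAt
  unfold Hc
  have : s0 ≠ 0 := by rintro rfl; simp at hs0'
  exact h2.add (by fun_prop (disch := exact pow_ne_zero 2 this))

end PartB

section PartB2
open MeasureTheory Set ProbabilityTheory

lemma measurable_hf (C : ℝ) : Measurable (hf C) := by
  unfold hf
  have := measurable_Gf
  fun_prop

/-- the measure with density hf -/
noncomputable def mu (C : ℝ) : Measure ℝ :=
  (volume.restrict (Ioi 0)).withDensity (fun T => ENNReal.ofReal (hf C T))

lemma integrable_mu (C : ℝ) (hC : ∀ T > 0, 0 ≤ hf C T) (s : ℝ) (hs : 0 < s) :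
    Integrable (fun T => exp (-s * T)) (mu C) := by
  unfold mu
  rw [integrable_withDensity_iff_integrable_smul' (by have := measurable_hf C; fun_prop)
    (Filter.Eventually.of_forall fun T => ENNReal.ofReal_lt_top)]
  refine (int_hf C s hs).1.congr ?_
  refine (ae_restrict_iff' measurableSet_Ioi).2 (Filter.Eventually.of_forall fun T hT => ?_)
  simp only [smul_eq_mul]
  rw [ENNReal.toReal_ofReal (hC T hT), mul_comm, neg_mul]

lemma mgf_mu (C : ℝ) (hC : ∀ T > 0, 0 ≤ hf C T) (s : ℝ) (hs : 0 < s) :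
    complexMGF id (mu C) (-(s : ℂ)) = Hc C s := by
  rw [← (int_hf C s hs).2]
  have : (-(s : ℂ)) = ((-s : ℝ) : ℂ) := by push_cast; rfl
  rw [this, complexMGF_ofReal]
  congr 1
  unfold mgf mu
  rw [integral_withDensity_eq_integral_toReal_smul (by have := measurable_hf C; fun_prop)
    (Filter.Eventually.of_forall fun T => ENNReal.ofReal_lt_top)]
  refine setIntegral_congr_fun measurableSet_Ioi fun T hT => ?_
  simp only [smul_eq_mul, id]
  rw [ENNReal.toReal_ofReal (hC T hT), mul_comm, neg_mul]

lemma mgf_eq (C : ℝ) (hC : ∀ T > 0, 0 ≤ hf C T) (s : ℂ) (hs : 0 < s.re) :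
    complexMGF id (mu C) (-s) = Hc C s := by
  have hU : IsOpen {s : ℂ | 0 < s.re} := isOpen_lt continuous_const Complex.continuous_re
  have hsub : Iio (0 : ℝ) ⊆ interior (integrableExpSet id (mu C)) := by
    apply interior_maximal _ isOpen_Iio
    intro t ht
    have ht' : t < 0 := ht
    have := integrable_mu C hC (-t) (by linarith)
    rw [neg_neg] at this
    exact this
  have hd : DifferentiableOn ℂ (fun s => complexMGF id (mu C) (-s)) {s : ℂ | 0 < s.re} := by
    refine DifferentiableOn.comp (g := complexMGF id (mu C)) (f := fun s : ℂ => -s)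
      (t := {z : ℂ | z.re ∈ interior (integrableExpSet id (mu C))})
      differentiableOn_complexMGF (by fun_prop) ?_
    intro z hz
    have hz' : 0 < z.re := hz
    apply hsub
    simp [hz']
  have key := AnalyticOnNhd.eqOn_of_preconnected_of_frequently_eq (z₀ := 1)
    (hd.analyticOnNhd hU) ((diff_Hc C).analyticOnNhd hU)
    (convex_halfSpace_re_gt 0).isPreconnected (by simp) ?_
  · exact key hs
  · have ht : Filter.Tendsto (fun x : ℝ => (x : ℂ)) (nhdsWithin 1 {1}ᶜ) (nhdsWithin 1 {1}ᶜ) := by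
      apply tendsto_nhdsWithin_of_tendsto_nhds_of_eventually_within
      · have : Filter.Tendsto (fun x : ℝ => (x : ℂ)) (nhds 1) (nhds ((1 : ℝ) : ℂ)) :=
          Complex.continuous_ofReal.tendsto 1
        rw [Complex.ofReal_one] at this
        exact this.mono_left nhdsWithin_le_nhds
      · filter_upwards [self_mem_nhdsWithin] with x hx
        simpa using hx
    apply ht.frequently
    apply Filter.Eventually.frequently
    have : ∀ᶠ x : ℝ in nhds 1, 0 < x := lt_mem_nhds one_pos
    filter_upwards [nhdsWithin_le_nhds this] with x hx
    exact mgf_mu C hC x hx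

lemma pos_sum (C : ℝ) (hC : ∀ T > 0, 0 ≤ hf C T) (X : Finset ℝ) (σ : ℝ) (hσ : 0 < σ) :
    0 ≤ (∑ x ∈ X, ∑ y ∈ X, Hc C (σ + (x - y : ℝ) * Complex.I)).re := by
  have hitg : ∀ x y : ℝ, Integrable
      (fun T : ℝ => Complex.exp (-(σ + (x - y : ℝ) * Complex.I) * T)) (mu C) := by
    intro x y
    refine Integrable.mono' (integrable_mu C hC σ hσ)
      (by apply Measurable.aestronglyMeasurable; fun_prop) (Filter.Eventually.of_forall fun T => ?_)
    rw [Complex.norm_exp]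
    simp
  have h1 : ∑ x ∈ X, ∑ y ∈ X, Hc C (σ + (x - y : ℝ) * Complex.I) =
      ∫ T, ∑ x ∈ X, ∑ y ∈ X, Complex.exp (-(σ + (x - y : ℝ) * Complex.I) * (T : ℝ)) ∂(mu C) := by
    rw [integral_finsetSum _ (fun x _ => integrable_finsetSum _ (fun y _ => hitg x y))]
    refine Finset.sum_congr rfl fun x _ => ?_
    rw [integral_finsetSum _ (fun y _ => hitg x y)]
    refine Finset.sum_congr rfl fun y _ => ?_
    rw [← mgf_eq C hC _ (by simpa using hσ)]
    rfl
  have h2 : ∀ T : ℝ, ∑ x ∈ X, ∑ y ∈ X, Complex.exp (-(σ + (x - y : ℝ) * Complex.I) * T) =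
      ((exp (-σ * T) * Complex.normSq (∑ x ∈ X, Complex.exp (-(x * Complex.I) * T)) : ℝ) : ℂ) := by
    intro T
    rw [Complex.ofReal_mul, Complex.normSq_eq_conj_mul_self, map_sum, Finset.sum_mul_sum,
      Finset.mul_sum, Finset.sum_comm]
    refine Finset.sum_congr rfl fun x _ => ?_
    rw [Finset.mul_sum]
    refine Finset.sum_congr rfl fun y _ => ?_
    rw [← Complex.exp_conj, Complex.ofReal_exp, ← Complex.exp_add, ← Complex.exp_add]
    congr 1
    simp
    ring
  simp_rw [h2] at h1
  rw [h1, integral_complex_ofReal, Complex.ofReal_re]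
  exact integral_nonneg fun T => mul_nonneg (exp_pos _).le (Complex.normSq_nonneg _)

/-- limit terms -/
noncomputable def lt0 (ω : ℝ) (v : ℤ × ℤ) : ℝ :=
  if v = 0 then 0 else if 4 * π ^ 2 * qf v = ω ^ 2 then 1 / (4 * π * qf v) else 0

lemma lim_bound (σ ω : ℝ) (hσ : 0 < σ) (hσ1 : σ ≤ 1) (v : ℤ × ℤ) (hv : v ≠ 0) :
    σ * (1 + qf v) ≤ (2 * ω ^ 2 + 2) * ‖((σ : ℂ) + ω * Complex.I) ^ 2 + 4 * π ^ 2 * qf v‖ := by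
  have hq := qf_ge_one v hv
  set w := ((σ : ℂ) + ω * Complex.I) ^ 2 + 4 * π ^ 2 * qf v with hw
  have hpi : 9 ≤ π ^ 2 := by nlinarith [pi_gt_three]
  have hre : w.re = σ ^ 2 - ω ^ 2 + 4 * π ^ 2 * qf v := by
    have : w = ((σ ^ 2 - ω ^ 2 + 4 * π ^ 2 * qf v : ℝ) : ℂ) + ((2 * σ * ω : ℝ) : ℂ) * Complex.I := by
      rw [hw]; push_cast; ring_nf; rw [Complex.I_sq]; ring
    rw [this]
    simp only [Complex.add_re, Complex.add_im, Complex.re_ofReal_mul, Complex.im_ofReal_mul,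
      Complex.ofReal_re, Complex.ofReal_im, Complex.I_re, Complex.I_im]
    ring
  have him : w.im = 2 * σ * ω := by
    have : w = ((σ ^ 2 - ω ^ 2 + 4 * π ^ 2 * qf v : ℝ) : ℂ) + ((2 * σ * ω : ℝ) : ℂ) * Complex.I := by
      rw [hw]; push_cast; ring_nf; rw [Complex.I_sq]; ring
    rw [this]
    simp only [Complex.add_re, Complex.add_im, Complex.re_ofReal_mul, Complex.im_ofReal_mul,
      Complex.ofReal_re, Complex.ofReal_im, Complex.I_re, Complex.I_im]
    ring
  have n1 : w.re ≤ ‖w‖ := Complex.re_le_norm w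
  have n2 : |w.im| ≤ ‖w‖ := Complex.abs_im_le_norm w
  have hwσ : σ ≤ ‖w‖ := by
    by_cases h : 1 ≤ ω ^ 2
    · have : 1 ≤ |ω| := by
        rw [← one_le_sq_iff₀ (abs_nonneg _), sq_abs]; exact h
      rw [him, abs_mul, abs_of_pos (by positivity : 0 < 2 * σ)] at n2
      nlinarith
    · push Not at h
      nlinarith
  by_cases h : qf v ≤ 2 * ω ^ 2 + 1
  · have h0 := norm_nonneg w
    nlinarith
  · push Not at h
    have : 1 + qf v ≤ ‖w‖ := by nlinarith
    nlinarith [sq_nonneg ω]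

lemma tm_lim (ω : ℝ) (v : ℤ × ℤ) : Filter.Tendsto
    (fun σ : ℝ => (σ : ℂ) ^ 2 * tm v (σ + ω * Complex.I)) (nhdsWithin 0 (Ioi 0))
    (nhds (-(lt0 ω v : ℂ))) := by
  unfold tm lt0
  by_cases hv : v = 0
  · simp [hv]
  simp only [hv, if_false]
  have hq := qf_ge_one v hv
  by_cases h : 4 * π ^ 2 * qf v = ω ^ 2
  · simp only [h, if_true]
    have hω : ω ≠ 0 := by
      rintro rfl
      have : 0 < 4 * π ^ 2 * qf v := by positivity
      rw [h] at this; simp at this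
    have hc : Filter.Tendsto (fun σ : ℝ => (4 * π : ℂ) / ((σ : ℂ) + 2 * ω * Complex.I) ^ 2)
        (nhdsWithin 0 (Ioi 0)) (nhds ((4 * π : ℂ) / (((0 : ℝ) : ℂ) + 2 * ω * Complex.I) ^ 2)) := by
      have : ContinuousAt (fun σ : ℝ => (4 * π : ℂ) / ((σ : ℂ) + 2 * ω * Complex.I) ^ 2) 0 := by
        apply ContinuousAt.div (by fun_prop) (by fun_prop)
        apply pow_ne_zero
        simp [hω]
      exact this.tendsto.mono_left nhdsWithin_le_nhds
    have e : (4 * π : ℂ) / (((0 : ℝ) : ℂ) + 2 * ω * Complex.I) ^ 2 = -((1 / (4 * π * qf v) : ℝ) : ℂ) := by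
      have hωc : (ω : ℂ) ^ 2 = 4 * π ^ 2 * qf v := by rw [← Complex.ofReal_pow, ← h]; push_cast; rfl
      have : (((0 : ℝ) : ℂ) + 2 * ω * Complex.I) ^ 2 = -(4 * (4 * π ^ 2 * qf v)) := by
        rw [← hωc, Complex.ofReal_zero, zero_add, mul_pow, Complex.I_sq]; ring
      rw [this]
      have h1 : (π : ℂ) ≠ 0 := by exact_mod_cast pi_ne_zero
      have h2 : (qf v : ℂ) ≠ 0 := by exact_mod_cast (by positivity : qf v ≠ 0)
      push_cast
      field_simp
    rw [e] at hc
    refine hc.congr' ?_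
    filter_upwards [self_mem_nhdsWithin] with σ hσ
    have hσ' : (σ : ℂ) ≠ 0 := by
      have : (0 : ℝ) < σ := hσ
      exact_mod_cast this.ne'
    have hωc : (4 * π ^ 2 * qf v : ℂ) = (ω : ℂ) ^ 2 := by
      have := congrArg (fun x : ℝ => (x : ℂ)) h
      push_cast at this
      exact this
    have : ((σ : ℂ) + ω * Complex.I) ^ 2 + 4 * π ^ 2 * qf v = σ * (σ + 2 * ω * Complex.I) := by
      rw [hωc]; ring_nf; rw [Complex.I_sq]; ring
    rw [this, mul_pow, mul_div_assoc', mul_div_mul_left _ _ (pow_ne_zero 2 hσ')]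
  · simp only [h, if_false]
    have hc : ContinuousAt (fun σ : ℝ => (σ : ℂ) ^ 2 *
        (4 * π / ((σ + ω * Complex.I) ^ 2 + 4 * π ^ 2 * qf v) ^ 2)) 0 := by
      apply ContinuousAt.mul (by fun_prop)
      apply ContinuousAt.div (by fun_prop) (by fun_prop)
      apply pow_ne_zero
      rw [Complex.ofReal_zero, zero_add, mul_pow, Complex.I_sq]
      intro h'
      apply h
      have : ((4 * π ^ 2 * qf v : ℝ) : ℂ) = ((ω ^ 2 : ℝ) : ℂ) := by push_cast; linear_combination h'
      exact_mod_cast this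
    have := hc.tendsto.mono_left (nhdsWithin_le_nhds (s := Ioi (0 : ℝ)))
    simpa using this

lemma tm_bd (ω σ : ℝ) (hσ : 0 < σ) (hσ1 : σ ≤ 1) (v : ℤ × ℤ) :
    ‖(σ : ℂ) ^ 2 * tm v (σ + ω * Complex.I)‖ ≤
      4 * π * (2 * ω ^ 2 + 2) ^ 2 * (1 / (1 + qf v) ^ 2) := by
  have hq := qf_nonneg v
  unfold tm
  split_ifs with hv
  · simp only [mul_zero, norm_zero]; positivity
  · have hb := lim_bound σ ω hσ hσ1 v hv
    set w := ((σ : ℂ) + ω * Complex.I) ^ 2 + 4 * π ^ 2 * qf v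
    have hw : 0 < ‖w‖ := by
      by_contra h'
      have : ‖w‖ = 0 := le_antisymm (not_lt.1 h') (norm_nonneg _)
      rw [this, mul_zero] at hb
      have : 0 < σ * (1 + qf v) := by positivity
      linarith
    rw [norm_mul, norm_div, norm_pow, norm_pow]
    have e1 : ‖(4 * π : ℂ)‖ = 4 * π := by simp [abs_of_pos pi_pos]
    have e2 : ‖(σ : ℂ)‖ = σ := by simp [abs_of_pos hσ]
    rw [e1, e2]
    have : (σ / ‖w‖) ^ 2 ≤ ((2 * ω ^ 2 + 2) / (1 + qf v)) ^ 2 := by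
      refine pow_le_pow_left₀ (by positivity) ?_ 2
      rw [div_le_div_iff₀ hw (by positivity)]
      exact hb
    calc σ ^ 2 * (4 * π / ‖w‖ ^ 2) = 4 * π * (σ / ‖w‖) ^ 2 := by rw [div_pow]; ring
      _ ≤ 4 * π * ((2 * ω ^ 2 + 2) / (1 + qf v)) ^ 2 := by gcongr
      _ = _ := by rw [div_pow]; ring

lemma summable_lt0 (ω : ℝ) : Summable (lt0 ω) := by
  refine Summable.of_norm_bounded (summable_base.mul_left (4 * π * (2 * ω ^ 2 + 2) ^ 2)) fun v => ?_
  have h := (tm_lim ω v).norm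
  rw [norm_neg, Complex.norm_real] at h
  refine le_of_tendsto h ?_
  filter_upwards [Ioc_mem_nhdsGT (one_pos : (0 : ℝ) < 1)] with σ hσ
  exact tm_bd ω σ hσ.1 hσ.2 v

lemma Hc_lim (C ω : ℝ) : Filter.Tendsto
    (fun σ : ℝ => (σ : ℂ) ^ 2 * Hc C (σ + ω * Complex.I)) (nhdsWithin 0 (Ioi 0))
    (nhds ((((if ω = 0 then C else 0) - ∑' v, lt0 ω v : ℝ)) : ℂ)) := by
  have h1 := tendsto_tsum_of_dominated_convergence
    (summable_base.mul_left (4 * π * (2 * ω ^ 2 + 2) ^ 2)) (tm_lim ω) (by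
      filter_upwards [Ioc_mem_nhdsGT (one_pos : (0 : ℝ) < 1)] with σ hσ v
      exact tm_bd ω σ hσ.1 hσ.2 v)
  have h2 : Filter.Tendsto (fun σ : ℝ => (σ : ℂ) ^ 2 * (C / (σ + ω * Complex.I) ^ 2))
      (nhdsWithin 0 (Ioi 0)) (nhds ((if ω = 0 then C else 0 : ℝ) : ℂ)) := by
    by_cases hω : ω = 0
    · simp only [hω, if_true]
      refine tendsto_const_nhds.congr' ?_
      filter_upwards [self_mem_nhdsWithin] with σ hσ
      have hσ' : (σ : ℂ) ≠ 0 := by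
        have : (0 : ℝ) < σ := hσ
        exact_mod_cast this.ne'
      simp
      field_simp
    · simp only [hω, if_false]
      have hc : ContinuousAt (fun σ : ℝ => (σ : ℂ) ^ 2 * ((C : ℂ) / (σ + ω * Complex.I) ^ 2)) 0 := by
        apply ContinuousAt.mul (by fun_prop)
        apply ContinuousAt.div (by fun_prop) (by fun_prop)
        apply pow_ne_zero
        simp [hω]
      have := hc.tendsto.mono_left (nhdsWithin_le_nhds (s := Ioi (0 : ℝ)))
      simpa using this
  have h3 := h2.add h1
  rw [tsum_neg, ← Complex.ofReal_tsum, ← sub_eq_add_neg, ← Complex.ofReal_sub] at h3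
  refine h3.congr fun σ => ?_
  unfold Hc
  rw [tsum_mul_left]; ring

lemma lim_ineq (C : ℝ) (hC : ∀ T > 0, 0 ≤ hf C T) (X : Finset ℝ) :
    0 ≤ ∑ x ∈ X, ∑ y ∈ X, ((if x - y = 0 then C else 0) - ∑' v, lt0 (x - y) v) := by
  have h : Filter.Tendsto (fun σ : ℝ => (∑ x ∈ X, ∑ y ∈ X,
      (σ : ℂ) ^ 2 * Hc C (σ + (x - y : ℝ) * Complex.I)).re) (nhdsWithin 0 (Ioi 0))
      (nhds (∑ x ∈ X, ∑ y ∈ X, ((((if x - y = 0 then C else 0) - ∑' v, lt0 (x - y) v : ℝ)) : ℂ)).re) :=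
    (Complex.continuous_re.tendsto _).comp
      (tendsto_finsetSum _ fun x _ => tendsto_finsetSum _ fun y _ => Hc_lim C (x - y))
  have e : (∑ x ∈ X, ∑ y ∈ X, ((((if x - y = 0 then C else 0) - ∑' v, lt0 (x - y) v : ℝ)) : ℂ)).re =
      ∑ x ∈ X, ∑ y ∈ X, ((if x - y = 0 then C else 0) - ∑' v, lt0 (x - y) v) := by
    simp_rw [← Complex.ofReal_sum]
    exact Complex.ofReal_re _
  rw [e] at h
  refine ge_of_tendsto h ?_
  filter_upwards [self_mem_nhdsWithin] with σ hσ
  have := pos_sum C hC X σ hσ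
  simp_rw [← Finset.mul_sum]
  rw [← Complex.ofReal_pow, Complex.re_ofReal_mul]
  positivity

end PartB2

section PartB3
open Set

lemma folner (F : Finset ℝ) : ∃ X : Finset ℝ, X.Nonempty ∧
    ∀ f ∈ F, X.card ≤ 2 * (X.filter fun x => x + f ∈ X).card := by
  classical
  let A : ℕ → Finset (F → ℕ) := fun K => Fintype.piFinset (fun _ : F => Finset.range (K + 1))
  let φ : (F → ℕ) → ℝ := fun k => ∑ f : F, (k f : ℝ) * (f : ℝ)
  let X : ℕ → Finset ℝ := fun K => (A K).image φ
  have hcard : ∀ K, (X K).card ≤ (K + 1) ^ F.card := by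
    intro K
    refine Finset.card_image_le.trans ?_
    simp [A, Fintype.card_piFinset]
  have hne : ∀ K, (X K).Nonempty := by
    intro K
    refine ⟨φ 0, Finset.mem_image_of_mem _ ?_⟩
    simp [A]
  have hsub : ∀ K, X K ⊆ X (K + 1) := by
    intro K
    apply Finset.image_subset_image
    intro k hk
    simp only [A, Fintype.mem_piFinset, Finset.mem_range] at hk ⊢
    intro f; have := hk f; omega
  have hadd : ∀ K, ∀ f ∈ F, ∀ x ∈ X K, x + f ∈ X (K + 1) := by
    intro K f hf x hx
    obtain ⟨k, hk, rfl⟩ := Finset.mem_image.1 hx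
    refine Finset.mem_image.2 ⟨k + Pi.single ⟨f, hf⟩ 1, ?_, ?_⟩
    · simp only [A, Fintype.mem_piFinset, Finset.mem_range] at hk ⊢
      intro g
      have := hk g
      by_cases hg : g = ⟨f, hf⟩
      · subst hg; simp; omega
      · simp [Pi.single_eq_of_ne hg]; omega
    · simp only [φ, Pi.add_apply, Nat.cast_add, add_mul, Finset.sum_add_distrib]
      congr 1
      rw [Finset.sum_eq_single ⟨f, hf⟩]
      · simp
      · intro g _ hg; simp [Pi.single_eq_of_ne hg]
      · simp
  have hK : ∃ K, (X (K + 1)).card ≤ 2 * (X K).card := by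
    by_contra h
    push Not at h
    have hpow : ∀ K, 2 ^ K ≤ (X K).card := by
      intro K
      induction K with
      | zero => simpa using (hne 0)
      | succ K ih => rw [pow_succ]; have := h K; omega
    have ht := tendsto_pow_const_div_const_pow_of_one_lt F.card (one_lt_two : (1 : ℝ) < 2)
    have ht2 := (Filter.tendsto_add_atTop_iff_nat 1).2 ht
    obtain ⟨K, hKK⟩ := (ht2.eventually (gt_mem_nhds (by norm_num : (0 : ℝ) < 1 / 2))).exists
    have h1 : ((2 : ℝ) ^ K) ≤ ((K + 1 : ℕ) : ℝ) ^ F.card := by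
      exact_mod_cast (hpow K).trans (hcard K)
    rw [div_lt_iff₀ (by positivity), pow_succ] at hKK
    linarith
  obtain ⟨K, hK⟩ := hK
  refine ⟨X (K + 1), hne _, fun f hf => hK.trans ?_⟩
  gcongr
  intro x hx
  exact Finset.mem_filter.2 ⟨hsub K hx, hadd K f hf x hx⟩

lemma lt0_nonneg (ω : ℝ) (v : ℤ × ℤ) : 0 ≤ lt0 ω v := by
  have := qf_nonneg v
  unfold lt0
  split_ifs <;> positivity

lemma fin_bound (C : ℝ) (hC : ∀ T > 0, 0 ≤ hf C T) (V : Finset (ℤ × ℤ)) (hV : 0 ∉ V) :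
    ∑ v ∈ V, 1 / (8 * π * qf v) ≤ C := by
  classical
  obtain ⟨X, hXne, hX⟩ := folner (V.image fun v => 2 * π * √(qf v))
  have hXc : (0 : ℝ) < X.card := by exact_mod_cast hXne.card_pos
  have h := lim_ineq C hC X
  have h1 : ∑ x ∈ X, ∑ y ∈ X, (if x - y = 0 then C else 0) = X.card * C := by
    have : ∀ x ∈ X, ∑ y ∈ X, (if x - y = 0 then C else 0) = C := by
      intro x hx
      simp_rw [sub_eq_zero]
      simp [hx]
    rw [Finset.sum_congr rfl this]; simp
  simp_rw [Finset.sum_sub_distrib] at h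
  rw [h1] at h
  have h2 : ∑ x ∈ X, ∑ y ∈ X, ∑ v ∈ V, lt0 (x - y) v ≤ ∑ x ∈ X, ∑ y ∈ X, ∑' v, lt0 (x - y) v := by
    refine Finset.sum_le_sum fun x _ => Finset.sum_le_sum fun y _ => ?_
    exact (summable_lt0 _).sum_le_tsum V fun v _ => lt0_nonneg _ v
  have h3 : ∑ x ∈ X, ∑ y ∈ X, ∑ v ∈ V, lt0 (x - y) v = ∑ v ∈ V, ∑ y ∈ X, ∑ x ∈ X, lt0 (x - y) v := by
    rw [Finset.sum_comm]
    rw [Finset.sum_comm (s := V)]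
    refine Finset.sum_congr rfl fun y _ => ?_
    rw [Finset.sum_comm]
  have h4 : ∀ v ∈ V, X.card * (1 / (8 * π * qf v)) ≤ ∑ y ∈ X, ∑ x ∈ X, lt0 (x - y) v := by
    intro v hv
    have hv0 : v ≠ 0 := fun h => hV (h ▸ hv)
    have hq := qf_ge_one v hv0
    set f := 2 * π * √(qf v) with hf
    have hc := hX f (Finset.mem_image_of_mem _ hv)
    have hlt : lt0 f v = 1 / (4 * π * qf v) := by
      unfold lt0
      rw [if_neg hv0, if_pos]
      rw [hf, mul_pow, mul_pow, Real.sq_sqrt (by linarith)]; ring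
    calc X.card * (1 / (8 * π * qf v)) ≤ (2 * (X.filter fun x => x + f ∈ X).card : ℝ) * (1 / (8 * π * qf v)) := by
          gcongr; exact_mod_cast hc
      _ = ∑ y ∈ X.filter (fun x => x + f ∈ X), lt0 f v := by
          rw [Finset.sum_const, hlt, nsmul_eq_mul]; field_simp; ring
      _ ≤ ∑ y ∈ X.filter (fun x => x + f ∈ X), ∑ x ∈ X, lt0 (x - y) v := by
          refine Finset.sum_le_sum fun y hy => ?_
          have := Finset.single_le_sum (f := fun x => lt0 (x - y) v) (fun x _ => lt0_nonneg _ _)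
            (Finset.mem_filter.1 hy).2
          simpa using this
      _ ≤ _ := Finset.sum_le_sum_of_subset_of_nonneg (Finset.filter_subset _ _)
          fun y _ _ => Finset.sum_nonneg fun x _ => lt0_nonneg _ _
  have h5 := Finset.sum_le_sum h4
  rw [← Finset.mul_sum, ← h3] at h5
  have : X.card * ∑ v ∈ V, 1 / (8 * π * qf v) ≤ X.card * C := by linarith
  exact le_of_mul_le_mul_left this hXc

lemma not_summable_qf : ¬ Summable fun v : ℤ × ℤ => 1 / qf v := by
  intro h
  let i : (Σ a : ℕ, Fin (a + 1)) → ℤ × ℤ := fun p => ((p.1 : ℤ) + 1, ((p.2 : ℕ) : ℤ) + 1)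
  have hi : Function.Injective i := by
    rintro ⟨a, b⟩ ⟨a', b'⟩ h
    simp only [i, Prod.mk.injEq] at h
    obtain ⟨h1, h2⟩ := h
    have : a = a' := by omega
    subst this
    have : b = b' := by apply Fin.ext; omega
    subst this; rfl
  have h1 := (h.comp_injective hi).sigma
  have h2 : Summable fun a : ℕ => 1 / 2 * (1 / ((a : ℝ) + 1)) := by
    refine Summable.of_nonneg_of_le (fun a => by positivity) (fun a => ?_) h1
    rw [tsum_fintype]
    have : ∀ b : Fin (a + 1), 1 / (2 * ((a : ℝ) + 1) ^ 2) ≤ ((fun v : ℤ × ℤ => 1 / qf v) ∘ i) ⟨a, b⟩ := by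
      intro b
      simp only [Function.comp, i, qf]
      push_cast
      have hb : ((b : ℕ) : ℝ) ≤ a := by exact_mod_cast Nat.lt_succ_iff.1 b.2
      gcongr
      nlinarith [Nat.cast_nonneg (α := ℝ) (b : ℕ)]
    have h3 := Finset.sum_le_sum (s := Finset.univ) fun b _ => this b
    refine le_trans (le_of_eq ?_) h3
    simp
    field_simp
  have h3 := (summable_mul_left_iff (by norm_num : (1 / 2 : ℝ) ≠ 0)).1 h2
  have h4 : Summable fun a : ℕ => 1 / ((a + 1 : ℕ) : ℝ) := by simpa using h3
  exact Real.not_summable_one_div_natCast ((summable_nat_add_iff 1).1 h4)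

lemma no_lower (C : ℝ) (hC : ∀ T > 0, 0 ≤ hf C T) : False := by
  apply not_summable_qf
  have : Summable fun v : ℤ × ℤ => 1 / (8 * π * qf v) := by
    refine summable_of_sum_le (c := C) (fun v => ?_) (fun V => ?_)
    · have := qf_nonneg v; positivity
    · classical
      refine le_trans (le_of_eq ?_) (fin_bound C hC (V.erase 0) (Finset.notMem_erase _ _))
      rw [Finset.sum_erase]
      simp [qf_zero]
  have h2 := this.mul_left (8 * π)
  refine h2.congr fun v => ?_
  by_cases hq : qf v = 0
  · simp [hq]
  · field_simp

end PartB3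

section PartC1
open MeasureTheory Set

lemma round_fiber (n : ℤ) : (round : ℝ → ℤ) ⁻¹' {n} = Ico ((n : ℝ) - 1 / 2) (n + 1 / 2) := by
  ext x
  simp only [mem_preimage, mem_singleton_iff, round_eq, Int.floor_eq_iff, mem_Ico]
  constructor <;> rintro ⟨h1, h2⟩ <;> constructor <;> linarith

lemma measurable_round' : Measurable (round : ℝ → ℤ) := by
  refine measurable_to_countable' fun n => ?_
  rw [round_fiber]; exact measurableSet_Ico

lemma round_mp : MeasurePreserving (round : ℝ → ℤ) volume Measure.count := by
  refine ⟨measurable_round', ?_⟩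
  refine Measure.ext_of_singleton fun n => ?_
  rw [Measure.map_apply measurable_round' (measurableSet_singleton n), round_fiber]
  simp
  ring_nf

noncomputable def Mf (z : ℝ) : ℝ := ∑' v : ℤ × ℤ, max (z - qf v) 0

lemma summable_Mf (z : ℝ) : Summable fun v : ℤ × ℤ => max (z - qf v) 0 := by
  refine summable_of_hasFiniteSupport ((finite_qf_lt z).subset fun v hv => ?_)
  simp only [Function.mem_support] at hv
  by_contra h
  apply hv
  have h' : ¬ qf v < z := h
  exact max_eq_right (by linarith)

lemma Mf_nonneg (z : ℝ) : 0 ≤ Mf z := tsum_nonneg fun _ => le_max_right _ _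

lemma lint_Mf (z : ℝ) : ∫⁻ p : ℝ × ℝ, ENNReal.ofReal (max (z - qf (round p.1, round p.2)) 0)
    = ENNReal.ofReal (Mf z) := by
  have hp : MeasurePreserving (Prod.map (round : ℝ → ℤ) (round : ℝ → ℤ)) (volume.prod volume)
    (Measure.count.prod Measure.count) := round_mp.prod round_mp
  have hm : Measurable fun v : ℤ × ℤ => ENNReal.ofReal (max (z - qf v) 0) := measurable_of_countable _
  have := hp.lintegral_comp hm
  rw [lintegral_prod _ hm.aemeasurable] at this
  simp only [lintegral_count] at this
  rw [Mf, ENNReal.ofReal_tsum_of_nonneg (fun _ => le_max_right _ _) (summable_Mf z),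
    ENNReal.tsum_prod', ← this]
  rfl

lemma cont_sub_round : Continuous fun s : ℝ => (s - round s) ^ 2 := by
  have h : (fun s : ℝ => (s - round s) ^ 2) = fun s : ℝ => ‖(s : UnitAddCircle)‖ ^ 2 := by
    ext s
    rw [UnitAddCircle.norm_eq, sq_abs]
  rw [h]
  exact ((AddCircle.continuous_mk' _).norm).pow 2

lemma round_sq_meas : Measurable fun s : ℝ => s ^ 2 - (round s : ℝ) ^ 2 := by
  have : Measurable fun s : ℝ => ((round s : ℤ) : ℝ) :=
    (measurable_of_countable (fun n : ℤ => (n : ℝ))).comp measurable_round'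
  fun_prop

lemma sub_round_bd (s : ℝ) : (s - round s) ^ 2 ≤ 1 / 4 := by
  have := abs_sub_round s
  rw [← sq_abs]
  nlinarith [abs_nonneg (s - round s)]

lemma round_sq_bd (R s : ℝ) (hs : |s| ≤ R) : |s ^ 2 - (round s : ℝ) ^ 2| ≤ R + 1 := by
  have h1 := abs_sub_round s
  have : s ^ 2 - (round s : ℝ) ^ 2 = (s - round s) * (2 * s - (s - round s)) := by ring
  rw [this, abs_mul]
  have h2 : |2 * s - (s - round s)| ≤ 2 * R + 1 / 2 := by
    calc _ ≤ |2 * s| + |s - round s| := abs_sub _ _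
      _ ≤ _ := by rw [abs_mul, abs_two]; linarith
  have hR := (abs_nonneg s).trans hs
  calc _ ≤ (1 / 2) * (2 * R + 1 / 2) := by gcongr
    _ ≤ _ := by linarith

lemma slice (R : ℝ) (hR : 0 ≤ R) : -R ≤ ∫ s in (-R)..R, (s ^ 2 - (round s : ℝ) ^ 2) := by
  have key := intervalIntegral.sub_le_integral_of_hasDeriv_right_of_le (a := -R) (b := R)
    (g := fun s : ℝ => s * (s - round s) ^ 2 - s / 2)
    (g' := fun s : ℝ => 3 * (s - round s) ^ 2 + 2 * round s * (s - round s) - 1 / 2)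
    (φ := fun s : ℝ => s ^ 2 - (round s : ℝ) ^ 2) (by linarith)
    (((continuous_id.mul cont_sub_round).sub (continuous_id.div_const 2)).continuousOn)
    ?_ ?_ ?_
  · have h1 := sub_round_bd R
    have h2 := sub_round_bd (-R)
    have : -R ≤ (fun s : ℝ => s * (s - round s) ^ 2 - s / 2) R
        - (fun s : ℝ => s * (s - round s) ^ 2 - s / 2) (-R) := by
      simp only
      nlinarith [mul_nonneg hR (sq_nonneg (R - round R)), mul_nonneg hR (sq_nonneg (-R - round (-R)))]
    exact this.trans key
  · intro x _
    have h1 : HasDerivAt (fun s : ℝ => s * (s - round x) ^ 2 - s / 2)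
      (3 * (x - round x) ^ 2 + 2 * round x * (x - round x) - 1 / 2) x := by
      have := ((hasDerivAt_id x).mul (((hasDerivAt_id x).sub_const (round x : ℝ)).pow 2)).sub
        ((hasDerivAt_id x).div_const 2)
      refine this.congr_deriv ?_
      simp only [id_eq, Pi.pow_apply]
      push_cast
      ring
    refine h1.hasDerivWithinAt.congr_of_eventuallyEq ?_ rfl
    have hx := (round_fiber (round x)).subset (rfl : x ∈ round ⁻¹' {round x})
    filter_upwards [Ioo_mem_nhdsGT hx.2] with y hy
    have : y ∈ (round : ℝ → ℤ) ⁻¹' {round x} := by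
      rw [round_fiber]; exact ⟨hx.1.trans hy.1.le, hy.2⟩
    have : round y = round x := this
    rw [this]
  · refine Measure.integrableOn_of_bounded (M := R + 1) (by simp) round_sq_meas.aestronglyMeasurable ?_
    refine (ae_restrict_iff' measurableSet_Icc).2 (Filter.Eventually.of_forall fun s hs => ?_)
    exact round_sq_bd R s (abs_le.2 hs)
  · intro x _
    have := sub_round_bd x
    nlinarith

lemma disk_int (z : ℝ) (hz : 0 ≤ z) :
    ∫ p : ℝ × ℝ, max (z - (p.1 ^ 2 + p.2 ^ 2)) 0 = π / 2 * z ^ 2 := by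
  rw [← integral_comp_polarCoord_symm]
  have : ∀ p ∈ polarCoord.target, p.1 • max (z - ((polarCoord.symm p).1 ^ 2 + (polarCoord.symm p).2 ^ 2)) 0
      = (p.1 * max (z - p.1 ^ 2) 0) * 1 := by
    intro p _
    simp only [polarCoord_symm_apply, smul_eq_mul, mul_one]
    congr 3
    rw [mul_pow, mul_pow, ← mul_add, Real.cos_sq_add_sin_sq, mul_one]
  rw [setIntegral_congr_fun polarCoord.open_target.measurableSet this, polarCoord_target,
    Measure.volume_eq_prod, setIntegral_prod_mul (f := fun r : ℝ => r * max (z - r ^ 2) 0)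
      (g := fun _ => (1 : ℝ))]
  have h1 : ∫ r in Ioi (0 : ℝ), r * max (z - r ^ 2) 0 = ∫ r in (0 : ℝ)..√z, r * (z - r ^ 2) := by
    rw [intervalIntegral.integral_of_le (Real.sqrt_nonneg z)]
    rw [setIntegral_eq_of_subset_of_forall_sdiff_eq_zero (s := Ioc 0 √z) measurableSet_Ioi
      Ioc_subset_Ioi_self]
    · refine setIntegral_congr_fun measurableSet_Ioc fun r hr => ?_
      rw [max_eq_left]
      have := Real.sq_sqrt hz
      nlinarith [hr.1, hr.2]
    · intro r hr
      have h0 : 0 < r := hr.1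
      have h2 : √z < r := by
        by_contra h
        exact hr.2 ⟨h0, not_lt.1 h⟩
      rw [max_eq_right, mul_zero]
      have := Real.sq_sqrt hz
      nlinarith [Real.sqrt_nonneg z]
  rw [h1]
  have h2 : ∫ r in (0 : ℝ)..√z, r * (z - r ^ 2) = z ^ 2 / 4 := by
    have := intervalIntegral.integral_eq_sub_of_hasDerivAt (a := 0) (b := √z)
      (f := fun r : ℝ => z * r ^ 2 / 2 - r ^ 4 / 4) (f' := fun r => r * (z - r ^ 2))
      (fun r _ => by
        have := (((hasDerivAt_pow 2 r).const_mul z).div_const 2).sub ((hasDerivAt_pow 4 r).div_const 4)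
        refine this.congr_deriv ?_
        push_cast; ring) (Continuous.intervalIntegrable (by fun_prop) _ _)
    rw [this]
    have h4 : √z ^ 4 = z ^ 2 := by rw [show √z ^ 4 = (√z ^ 2) ^ 2 by ring, Real.sq_sqrt hz]
    simp only [Real.sq_sqrt hz, h4]
    ring
  rw [h2]
  simp
  rw [max_eq_left (by positivity)]
  ring

lemma disk_w (z : ℝ) (hz : 0 < z) :
    Integrable (fun p : ℝ × ℝ => {p : ℝ × ℝ | p.1 ^ 2 + p.2 ^ 2 < z}.indicator
      (fun p => p.1 ^ 2 - (round p.1 : ℝ) ^ 2) p) ∧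
    -(2 * z) ≤ ∫ p : ℝ × ℝ, {p : ℝ × ℝ | p.1 ^ 2 + p.2 ^ 2 < z}.indicator
      (fun p => p.1 ^ 2 - (round p.1 : ℝ) ^ 2) p := by
  have hD : MeasurableSet {p : ℝ × ℝ | p.1 ^ 2 + p.2 ^ 2 < z} :=
    measurableSet_lt (by fun_prop) (by fun_prop)
  have hsz := Real.sq_sqrt hz.le
  have hsub : {p : ℝ × ℝ | p.1 ^ 2 + p.2 ^ 2 < z} ⊆ Icc (-√z) √z ×ˢ Icc (-√z) √z := by
    intro p hp
    have hp' : p.1 ^ 2 + p.2 ^ 2 < z := hp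
    constructor
    · exact abs_le.1 (Real.abs_le_sqrt (by nlinarith [sq_nonneg p.2]))
    · exact abs_le.1 (Real.abs_le_sqrt (by nlinarith [sq_nonneg p.1]))
  have hfin : volume {p : ℝ × ℝ | p.1 ^ 2 + p.2 ^ 2 < z} < ⊤ := by
    refine (measure_mono hsub).trans_lt ?_
    exact (isCompact_Icc.prod isCompact_Icc).measure_lt_top
  have hitg : Integrable (fun p : ℝ × ℝ => {p : ℝ × ℝ | p.1 ^ 2 + p.2 ^ 2 < z}.indicator
      (fun p => p.1 ^ 2 - (round p.1 : ℝ) ^ 2) p) := by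
    refine (integrable_indicator_iff hD).2 ?_
    refine Measure.integrableOn_of_bounded (M := √z + 1) hfin.ne
      (round_sq_meas.comp measurable_fst).aestronglyMeasurable ?_
    refine (ae_restrict_iff' hD).2 (Filter.Eventually.of_forall fun p hp => ?_)
    exact round_sq_bd _ _ (abs_le.2 (hsub hp).1)
  refine ⟨hitg, ?_⟩
  rw [Measure.volume_eq_prod] at hitg ⊢
  rw [integral_prod_symm _ hitg]
  have hlow : ∫ t : ℝ, (Icc (-√z) √z).indicator (fun _ => -√z) t = -(2 * z) := by
    rw [integral_indicator measurableSet_Icc]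
    simp
    nlinarith
  rw [← hlow]
  refine integral_mono ((integrable_indicator_iff measurableSet_Icc).2 (by simp)) hitg.integral_prod_right ?_
  intro t
  simp only
  by_cases ht : t ^ 2 < z
  · rw [indicator_of_mem (show t ∈ Icc (-√z) √z from abs_le.1 (Real.abs_le_sqrt ht.le))]
    have h1 : ∫ s : ℝ, {p : ℝ × ℝ | p.1 ^ 2 + p.2 ^ 2 < z}.indicator
      (fun p => p.1 ^ 2 - (round p.1 : ℝ) ^ 2) (s, t) =
        ∫ s in (-√(z - t ^ 2))..√(z - t ^ 2), (s ^ 2 - (round s : ℝ) ^ 2) := by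
      rw [intervalIntegral.integral_of_le (by linarith [Real.sqrt_nonneg (z - t ^ 2)]),
        integral_Ioc_eq_integral_Ioo, ← integral_indicator measurableSet_Ioo]
      refine integral_congr_ae (Filter.Eventually.of_forall fun s => ?_)
      have : (s, t) ∈ {p : ℝ × ℝ | p.1 ^ 2 + p.2 ^ 2 < z} ↔ s ∈ Ioo (-√(z - t ^ 2)) √(z - t ^ 2) := by
        rw [mem_Ioo, ← abs_lt, Real.lt_sqrt (abs_nonneg s), sq_abs, Set.mem_ofPred_eq]
        exact lt_sub_iff_add_lt.symm
      simp only [indicator, this]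
    rw [h1]
    refine le_trans ?_ (slice _ (Real.sqrt_nonneg _))
    exact neg_le_neg (Real.sqrt_le_sqrt (by nlinarith [sq_nonneg t]))
  · have h0 : ∀ s : ℝ, {p : ℝ × ℝ | p.1 ^ 2 + p.2 ^ 2 < z}.indicator
      (fun p => p.1 ^ 2 - (round p.1 : ℝ) ^ 2) (s, t) = 0 := by
      intro s
      refine indicator_of_notMem ?_ _
      simp only [Set.mem_ofPred_eq]
      nlinarith [sq_nonneg s]
    simp only [h0, integral_zero]
    exact indicator_nonpos (fun _ _ => by simp) _

lemma Mf_lower (z : ℝ) (hz : 0 ≤ z) : π / 2 * z ^ 2 - 4 * z ≤ Mf z := by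
  rcases hz.eq_or_lt with rfl | hz
  · simpa using Mf_nonneg 0
  set D := {p : ℝ × ℝ | p.1 ^ 2 + p.2 ^ 2 < z} with hDdef
  obtain ⟨hi1, hl1⟩ := disk_w z hz
  have hi2 := hi1.swap
  have hl2 : -(2 * z) ≤ ∫ p : ℝ × ℝ, D.indicator (fun p => p.2 ^ 2 - (round p.2 : ℝ) ^ 2) p := by
    refine hl1.trans (le_of_eq ?_)
    rw [Measure.volume_eq_prod, ← integral_prod_swap]
    refine integral_congr_ae (Filter.Eventually.of_forall fun p => ?_)
    simp only [indicator, hDdef, Set.mem_ofPred_eq, Prod.fst_swap, Prod.snd_swap, add_comm]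
  have hi2' : Integrable (fun p : ℝ × ℝ => D.indicator (fun p => p.2 ^ 2 - (round p.2 : ℝ) ^ 2) p) := by
    refine hi2.congr (Filter.Eventually.of_forall fun p => ?_)
    simp only [indicator, hDdef, Set.mem_ofPred_eq, Prod.fst_swap, Prod.snd_swap, add_comm, Function.comp]
  have hi3 : Integrable (fun p : ℝ × ℝ => max (z - (p.1 ^ 2 + p.2 ^ 2)) 0) := by
    by_contra h
    have h1 := disk_int z hz.le
    rw [integral_undef h] at h1
    have : 0 < π / 2 * z ^ 2 := by positivity
    linarith
  have hmeas : Measurable fun p : ℝ × ℝ => max (z - qf (round p.1, round p.2)) 0 := by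
    have : Measurable fun v : ℤ × ℤ => max (z - qf v) 0 := measurable_of_countable _
    exact this.comp ((measurable_round'.comp measurable_fst).prodMk (measurable_round'.comp measurable_snd))
  have hnn : ∀ p : ℝ × ℝ, 0 ≤ max (z - qf (round p.1, round p.2)) 0 := fun p => le_max_right _ _
  have hi4 : Integrable fun p : ℝ × ℝ => max (z - qf (round p.1, round p.2)) 0 := by
    refine ⟨hmeas.aestronglyMeasurable, ?_⟩
    rw [hasFiniteIntegral_iff_ofReal (Filter.Eventually.of_forall hnn), lint_Mf]
    exact ENNReal.ofReal_lt_top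
  have hM : ∫ p : ℝ × ℝ, max (z - qf (round p.1, round p.2)) 0 = Mf z := by
    rw [integral_eq_lintegral_of_nonneg_ae (Filter.Eventually.of_forall hnn)
      hmeas.aestronglyMeasurable, lint_Mf, ENNReal.toReal_ofReal (Mf_nonneg z)]
  have := integral_mono ((hi3.add hi1).add hi2') hi4 (fun p => by
    simp only [Pi.add_apply]
    by_cases hp : p ∈ D
    · rw [indicator_of_mem hp, indicator_of_mem hp]
      have hp' : p.1 ^ 2 + p.2 ^ 2 < z := hp
      rw [max_eq_left (by linarith)]
      refine le_trans (le_of_eq ?_) (le_max_left _ _)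
      simp only [qf]
      ring
    · rw [indicator_of_notMem hp, indicator_of_notMem hp]
      have hp' : ¬ p.1 ^ 2 + p.2 ^ 2 < z := hp
      rw [max_eq_right (by linarith)]
      simp)
  rw [hM] at this
  have e : ∫ p : ℝ × ℝ, (((fun p : ℝ × ℝ => max (z - (p.1 ^ 2 + p.2 ^ 2)) 0) + (fun p : ℝ × ℝ => D.indicator (fun p => p.1 ^ 2 - (round p.1 : ℝ) ^ 2) p)) + (fun p : ℝ × ℝ => D.indicator (fun p => p.2 ^ 2 - (round p.2 : ℝ) ^ 2) p)) p = _ := integral_add' (hi3.add hi1) hi2'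
  rw [integral_add' hi3 hi1, disk_int z hz.le] at e
  have := e.symm.le.trans this
  linarith

end PartC1

section PartC2
open MeasureTheory Set

noncomputable def gg (u : ℝ) : ℝ := √2 * √(1 - u) - √(1 - u ^ 2)

noncomputable def g1 (t : ℝ) : ℝ :=
  -((2 * t + 1) * √(1 - t)) / (2 * √(1 + t) * (t + √((1 + t) / 2)))

noncomputable def g2 (t : ℝ) : ℝ :=
  1 / √(1 - t ^ 2) ^ 3 - √2 / 4 / √(1 - t) ^ 3

lemma gg_cont : Continuous gg := by unfold gg; fun_prop

lemma g1_cont : ContinuousOn g1 (Icc 0 1) := by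
  unfold g1
  refine ContinuousOn.div (by fun_prop) (by fun_prop) ?_
  intro t ht
  have h1 : 0 < √(1 + t) := Real.sqrt_pos.2 (by linarith [ht.1])
  have h2 : 0 < √((1 + t) / 2) := Real.sqrt_pos.2 (by linarith [ht.1])
  have := ht.1
  positivity

lemma g1_eq (t : ℝ) (ht : 0 ≤ t) (ht1 : t < 1) :
    g1 t = t / √(1 - t ^ 2) - √2 / 2 / √(1 - t) := by
  have h1 : 0 < √(1 + t) := Real.sqrt_pos.2 (by linarith)
  have h3 : 0 < √(1 - t) := Real.sqrt_pos.2 (by linarith)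
  have e1 := Real.sq_sqrt (show 0 ≤ 1 + t by linarith)
  have e3 := Real.sq_sqrt (show 0 ≤ 1 - t by linarith)
  have e2 : √(1 - t ^ 2) = √(1 - t) * √(1 + t) := by
    rw [← Real.sqrt_mul (by linarith)]; congr 1; ring
  have e4 : √((1 + t) / 2) = √(1 + t) * √2 / 2 := by
    rw [Real.sqrt_div' _ (by norm_num)]
    have : √2 ≠ 0 := by positivity
    field_simp
    rw [Real.sq_sqrt (by norm_num)]
  have e5 := Real.sq_sqrt (show (0 : ℝ) ≤ 2 by norm_num)
  have h5 : 0 < √2 := by positivity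
  unfold g1
  rw [e2, e4]
  set a := √(1 + t)
  set b := √(1 - t)
  set c := √2
  have hd : 0 < t + a * c / 2 := by positivity
  rw [div_sub_div _ _ (by positivity) (by positivity),
    div_eq_div_iff (by positivity) (by positivity)]
  linear_combination (-(2 * t + 1) * a * b) * e3 + (a * b * c ^ 2 / 2) * e1
    + (a * b * (1 + t) / 2) * e5

lemma gg_deriv (t : ℝ) (ht : 0 ≤ t) (ht1 : t < 1) : HasDerivAt gg (g1 t) t := by
  rw [g1_eq t ht ht1]
  have h1 : (1 - t) ≠ 0 := by linarith
  have h2 : (1 - t ^ 2) ≠ 0 := by nlinarith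
  have d1 : HasDerivAt (fun u : ℝ => 1 - u) (-1) t := by
    simpa using (hasDerivAt_id t).const_sub 1
  have d2 : HasDerivAt (fun u : ℝ => 1 - u ^ 2) (-(2 * t)) t := by
    simpa using (hasDerivAt_pow 2 t).const_sub 1
  refine (((d1.sqrt h1).const_mul √2).sub (d2.sqrt h2)).congr_deriv ?_
  have h3 : 0 < √(1 - t) := Real.sqrt_pos.2 (by linarith)
  have h4 : 0 < √(1 - t ^ 2) := Real.sqrt_pos.2 (by nlinarith)
  field_simp
  ring

lemma g1_deriv (t : ℝ) (ht : 0 < t) (ht1 : t < 1) : HasDerivAt g1 (g2 t) t := by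
  have h1 : (1 - t) ≠ 0 := by linarith
  have h2 : (1 - t ^ 2) ≠ 0 := by nlinarith
  have d1 : HasDerivAt (fun u : ℝ => 1 - u) (-1) t := by
    simpa using (hasDerivAt_id t).const_sub 1
  have d2 : HasDerivAt (fun u : ℝ => 1 - u ^ 2) (-(2 * t)) t := by
    simpa using (hasDerivAt_pow 2 t).const_sub 1
  have h3 : 0 < √(1 - t) := Real.sqrt_pos.2 (by linarith)
  have h4 : 0 < √(1 - t ^ 2) := Real.sqrt_pos.2 (by nlinarith)
  have := ((hasDerivAt_id t).div (d2.sqrt h2) h4.ne').sub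
    ((hasDerivAt_const t (√2 / 2)).div (d1.sqrt h1) h3.ne')
  have e := Real.sq_sqrt (show 0 ≤ 1 - t ^ 2 by nlinarith)
  refine (this.congr_deriv ?_).congr_of_eventuallyEq ?_
  · unfold g2
    simp only [id_eq]
    set a := √(1 - t ^ 2)
    field_simp
    rw [e]
    ring
  · filter_upwards [Ioo_mem_nhds ht ht1] with s hs
    rw [g1_eq s hs.1.le hs.2]
    rfl

lemma g2_nonneg (t : ℝ) (ht : 0 < t) (ht1 : t < 1) : 0 ≤ g2 t := by
  have h3 : 0 < √(1 - t) := Real.sqrt_pos.2 (by linarith)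
  have e2 : √(1 - t ^ 2) = √(1 - t) * √(1 + t) := by
    rw [← Real.sqrt_mul (by linarith)]; congr 1; ring
  have h1 : 0 < √(1 + t) := Real.sqrt_pos.2 (by linarith)
  have h5 : √(1 + t) ≤ √2 := Real.sqrt_le_sqrt (by linarith)
  have e5 := Real.sq_sqrt (show (0 : ℝ) ≤ 2 by norm_num)
  have h6 : √(1 + t) ^ 3 ≤ √2 ^ 3 := by gcongr
  unfold g2
  rw [e2, sub_nonneg, div_le_div_iff₀ (by positivity) (by positivity), mul_pow]
  have h7 : √2 / 4 * √2 ^ 3 = 1 := by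
    have : √2 / 4 * √2 ^ 3 = (√2 ^ 2) ^ 2 / 4 := by ring
    rw [this, e5]; norm_num
  have h8 : √2 / 4 * √(1 + t) ^ 3 ≤ 1 := by
    exact (mul_le_mul_of_nonneg_left h6 (by positivity)).trans h7.le
  calc √2 / 4 * (√(1 - t) ^ 3 * √(1 + t) ^ 3) = (√2 / 4 * √(1 + t) ^ 3) * √(1 - t) ^ 3 := by ring
    _ ≤ 1 * √(1 - t) ^ 3 := by gcongr

lemma g2_int : IntervalIntegrable g2 volume 0 1 := by
  rw [intervalIntegrable_iff_integrableOn_Ioc_of_le zero_le_one]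
  exact intervalIntegral.integrableOn_deriv_of_nonneg g1_cont (fun t ht => g1_deriv t ht.1 ht.2)
    (fun t ht => g2_nonneg t ht.1 ht.2)

lemma gg_one : gg 1 = 0 := by simp [gg]
lemma g1_one : g1 1 = 0 := by simp [g1]

lemma g2_int_mul (f : ℝ → ℝ) (hf : Continuous f) :
    IntervalIntegrable (fun t => f t * g2 t) volume 0 1 :=
  g2_int.continuousOn_mul hf.continuousOn

lemma gg_rep (u : ℝ) (hu : 0 ≤ u) (hu1 : u ≤ 1) :
    ∫ t in (0 : ℝ)..1, max (t - u) 0 * g2 t = gg u := by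
  have hI := g2_int_mul (fun t => max (t - u) 0) (by fun_prop)
  have hmem : u ∈ uIcc (0 : ℝ) 1 := by rw [uIcc_of_le zero_le_one]; exact ⟨hu, hu1⟩
  have hI1 := hI.mono_set (uIcc_subset_uIcc left_mem_uIcc hmem)
  have hI2 := hI.mono_set (uIcc_subset_uIcc hmem right_mem_uIcc)
  rw [← intervalIntegral.integral_add_adjacent_intervals hI1 hI2]
  have z1 : ∫ t in (0 : ℝ)..u, max (t - u) 0 * g2 t = 0 := by
    rw [intervalIntegral.integral_congr (g := fun _ => 0)]
    · simp
    · intro t ht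
      rw [uIcc_of_le hu] at ht
      simp only
      rw [max_eq_right (by linarith [ht.2]), zero_mul]
  have e2 : EqOn (fun t => max (t - u) 0 * g2 t) (fun t => (t - u) * g2 t) (uIcc u 1) := by
    intro t ht
    rw [uIcc_of_le hu1] at ht
    simp only
    rw [max_eq_left (by linarith [ht.1])]
  have z2 : ∫ t in u..1, (t - u) * g2 t = gg u := by
    rw [intervalIntegral.integral_eq_sub_of_hasDerivAt_of_le hu1
      (f := fun t => (t - u) * g1 t - gg t)]
    · simp [gg_one, g1_one]
    · refine ContinuousOn.sub (ContinuousOn.mul (by fun_prop) (g1_cont.mono ?_)) gg_cont.continuousOn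
      exact Icc_subset_Icc_left hu
    · intro t ht
      have h0 : 0 < t := hu.trans_lt ht.1
      refine ((((hasDerivAt_id t).sub_const u).mul (g1_deriv t h0 ht.2)).sub
        (gg_deriv t h0.le ht.2)).congr_deriv ?_
      simp
    · exact (g2_int_mul (fun t => t - u) (by fun_prop)).mono_set (uIcc_subset_uIcc hmem right_mem_uIcc)
  rw [z1, intervalIntegral.integral_congr e2, z2, zero_add]

lemma gg_integral : ∫ t in (0 : ℝ)..1, gg t = 2 * √2 / 3 - π / 4 := by
  unfold gg
  rw [intervalIntegral.integral_sub (Continuous.intervalIntegrable (by fun_prop) _ _)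
    (Continuous.intervalIntegrable (by fun_prop) _ _), intervalIntegral.integral_const_mul]
  have h1 : ∫ t in (0 : ℝ)..1, √(1 - t) = 2 / 3 := by
    rw [intervalIntegral.integral_comp_sub_left (fun t => √t) 1]
    simp only [Real.sqrt_eq_rpow]
    rw [integral_rpow (by norm_num)]
    norm_num
  have h2 : ∫ t in (0 : ℝ)..1, √(1 - t ^ 2) = π / 4 := by
    have h := integral_sqrt_one_sub_sq
    rw [← intervalIntegral.integral_add_adjacent_intervals (b := 0)
      (Continuous.intervalIntegrable (by fun_prop) _ _)
      (Continuous.intervalIntegrable (by fun_prop) _ _)] at h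
    have h3 : ∫ t in (-1 : ℝ)..0, √(1 - t ^ 2) = ∫ t in (0 : ℝ)..1, √(1 - t ^ 2) := by
      have := intervalIntegral.integral_comp_neg (fun t => √(1 - t ^ 2)) (a := (0 : ℝ)) (b := 1)
      simpa using this.symm
    linarith
  rw [h1, h2]
  ring

lemma g2_sq : ∫ t in (0 : ℝ)..1, t ^ 2 / 2 * g2 t = 2 * √2 / 3 - π / 4 := by
  rw [← gg_integral]
  have hi := g2_int_mul (fun t => t ^ 2 / 2) (by fun_prop)
  have hg : IntervalIntegrable gg volume 0 1 := gg_cont.intervalIntegrable _ _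
  have := intervalIntegral.integral_eq_sub_of_hasDerivAt_of_le (zero_le_one (α := ℝ))
      (f := fun t => t ^ 2 / 2 * g1 t - t * gg t) (f' := fun t => t ^ 2 / 2 * g2 t - gg t)
      (ContinuousOn.sub (ContinuousOn.mul (by fun_prop) g1_cont)
        (continuous_id.mul gg_cont).continuousOn) (fun t ht => by
      refine ((((hasDerivAt_pow 2 t).div_const 2).mul (g1_deriv t ht.1 ht.2)).sub
        ((hasDerivAt_id t).mul (gg_deriv t ht.1.le ht.2))).congr_deriv ?_
      simp
      ring) (hi.sub hg)
  rw [intervalIntegral.integral_sub hi hg] at this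
  simp [gg_one, g1_one] at this
  linarith

lemma sum_gg (y : ℝ) (hy : 0 < y) (V : Finset (ℤ × ℤ)) (hV : ∀ v, v ∈ V ↔ qf v < y) :
    π * y * (2 * √2 / 3 - π / 4) - 4 * gg 0 ≤ ∑ v ∈ V, gg (qf v / y) := by
  have hrep : ∑ v ∈ V, gg (qf v / y) = ∫ t in (0 : ℝ)..1, (∑ v ∈ V, max (t - qf v / y) 0 * g2 t) := by
    rw [intervalIntegral.integral_finsetSum (fun v _ => g2_int_mul _ (by fun_prop))]
    refine Finset.sum_congr rfl fun v hv => (gg_rep _ (div_nonneg (qf_nonneg v) hy.le) ?_).symm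
    rw [div_le_one hy]; exact ((hV v).1 hv).le
  have hlow : ∫ t in (0 : ℝ)..1, (π * y * (t ^ 2 / 2 * g2 t) - 4 * (max (t - 0) 0 * g2 t))
      = π * y * (2 * √2 / 3 - π / 4) - 4 * gg 0 := by
    rw [intervalIntegral.integral_sub ((g2_int_mul _ (by fun_prop)).const_mul _)
      ((g2_int_mul _ (by fun_prop)).const_mul _), intervalIntegral.integral_const_mul,
      intervalIntegral.integral_const_mul, g2_sq, gg_rep 0 le_rfl zero_le_one]
  have hsum : IntervalIntegrable (fun t => ∑ v ∈ V, max (t - qf v / y) 0 * g2 t) volume 0 1 := by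
    have := IntervalIntegrable.sum V (fun v _ =>
      g2_int_mul (fun t => max (t - qf v / y) 0) (by fun_prop))
    refine this.congr (fun t _ => ?_)
    simp
  rw [hrep, ← hlow]
  refine intervalIntegral.integral_mono_on_of_le_Ioo zero_le_one
    (((g2_int_mul _ (by fun_prop)).const_mul _).sub ((g2_int_mul _ (by fun_prop)).const_mul _))
    hsum ?_
  intro t ht
  have hM : y * ∑ v ∈ V, max (t - qf v / y) 0 = Mf (t * y) := by
    rw [Mf, tsum_eq_sum (s := V), Finset.mul_sum]
    · refine Finset.sum_congr rfl fun v _ => ?_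
      rw [mul_max_of_nonneg _ _ hy.le, mul_zero, mul_sub, mul_div_cancel₀ _ hy.ne', mul_comm]
    · intro v hv
      rw [hV] at hv
      refine max_eq_right ?_
      nlinarith [ht.1, ht.2]
  have h1 := Mf_lower (t * y) (mul_nonneg ht.1.le hy.le)
  rw [← hM] at h1
  have h2 : π * y * (t ^ 2 / 2) - 4 * t ≤ ∑ v ∈ V, max (t - qf v / y) 0 := by
    refine le_of_mul_le_mul_left ?_ hy
    refine le_trans (le_of_eq ?_) h1
    ring
  rw [sub_zero, max_eq_left ht.1.le, ← Finset.sum_mul]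
  calc _ = (π * y * (t ^ 2 / 2) - 4 * t) * g2 t := by ring
    _ ≤ _ := mul_le_mul_of_nonneg_right h2 (g2_nonneg t ht.1 ht.2)

end PartC2

section PartC3
open Set

lemma S_le (T : ℝ) (hT : 1 ≤ T) (V : Finset (ℤ × ℤ)) (hV : ∀ v, v ∈ V ↔ qf v < T ^ 2) :
    (S (T ^ 4) : ℝ) ≤ ∑ v ∈ V, (2 * √((T ^ 2) ^ 2 - qf v ^ 2) + 1) := by
  classical
  set r : ℤ × ℤ → ℕ := fun v => ⌊√((T ^ 2) ^ 2 - qf v ^ 2)⌋₊ with hr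
  set W : Finset (ℤ × ℤ × ℤ) := V.biUnion fun v =>
    (Finset.Icc (-(r v : ℤ)) (r v)).image fun w => (v.1, v.2, w) with hW
  have hsub : {p : ℤ × ℤ × ℤ |
    (((p.1 : ℝ) ^ 2 + (p.2.1 : ℝ) ^ 2) ^ 2 + (p.2.2 : ℝ) ^ 2) < T ^ 4} ⊆ (W : Set (ℤ × ℤ × ℤ)) := by
    rintro ⟨a, b, w⟩ hp
    have hp' : ((a : ℝ) ^ 2 + (b : ℝ) ^ 2) ^ 2 + (w : ℝ) ^ 2 < T ^ 4 := hp
    have hq : qf (a, b) = (a : ℝ) ^ 2 + (b : ℝ) ^ 2 := rfl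
    rw [← hq] at hp'
    simp only [hW, Finset.coe_biUnion, mem_iUnion, Finset.coe_image, mem_image, Finset.mem_coe,
      Finset.mem_Icc]
    refine ⟨(a, b), ?_, w, ?_, rfl⟩
    · rw [hV]
      refine lt_of_pow_lt_pow_left₀ 2 (by positivity) ?_
      nlinarith [sq_nonneg (w : ℝ)]
    · have h1 : |(w : ℝ)| ≤ √((T ^ 2) ^ 2 - qf (a, b) ^ 2) := by
        refine Real.abs_le_sqrt ?_
        nlinarith
      have h2 : w.natAbs ≤ r (a, b) := by
        refine Nat.le_floor ?_
        rw [Nat.cast_natAbs, Int.cast_abs]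
        exact h1
      omega
  have h1 : S (T ^ 4) ≤ W.card := by
    unfold S
    rw [← Set.ncard_coe_finset]
    exact Set.ncard_le_ncard hsub W.finite_toSet
  have h2 : W.card ≤ ∑ v ∈ V, (2 * r v + 1) := by
    refine Finset.card_biUnion_le.trans (Finset.sum_le_sum fun v _ => ?_)
    refine Finset.card_image_le.trans ?_
    rw [Int.card_Icc]
    omega
  calc (S (T ^ 4) : ℝ) ≤ ((∑ v ∈ V, (2 * r v + 1) : ℕ) : ℝ) := by exact_mod_cast h1.trans h2
    _ = ∑ v ∈ V, (2 * (r v : ℝ) + 1) := by push_cast; rfl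
    _ ≤ _ := by
      refine Finset.sum_le_sum fun v _ => ?_
      have := Nat.floor_le (Real.sqrt_nonneg ((T ^ 2) ^ 2 - qf v ^ 2))
      simp only [hr]
      linarith

lemma card_le (T : ℝ) (hT : 1 ≤ T) (V : Finset (ℤ × ℤ)) (hV : ∀ v, v ∈ V ↔ qf v < T ^ 2) :
    (V.card : ℝ) ≤ 9 * T ^ 2 := by
  have hT0 : 0 ≤ T := by linarith
  have hsub : V ⊆ Finset.Icc (-(⌊T⌋₊ : ℤ)) ⌊T⌋₊ ×ˢ Finset.Icc (-(⌊T⌋₊ : ℤ)) ⌊T⌋₊ := by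
    rintro ⟨a, b⟩ hv
    rw [hV] at hv
    have hq : (a : ℝ) ^ 2 + (b : ℝ) ^ 2 < T ^ 2 := hv
    have key : ∀ c : ℤ, (c : ℝ) ^ 2 ≤ T ^ 2 → c.natAbs ≤ ⌊T⌋₊ := by
      intro c hc
      refine Nat.le_floor ?_
      rw [Nat.cast_natAbs, Int.cast_abs]
      exact abs_le_of_sq_le_sq hc hT0
    have ha := key a (by nlinarith [sq_nonneg (b : ℝ)])
    have hb := key b (by nlinarith [sq_nonneg (a : ℝ)])
    simp only [Finset.mem_product, Finset.mem_Icc]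
    omega
  have h := Finset.card_le_card hsub
  rw [Finset.card_product, Int.card_Icc] at h
  have h2 : ((⌊T⌋₊ : ℤ) + 1 - -(⌊T⌋₊ : ℤ)).toNat = 2 * ⌊T⌋₊ + 1 := by omega
  rw [h2] at h
  have h3 : (V.card : ℝ) ≤ (2 * (⌊T⌋₊ : ℝ) + 1) * (2 * (⌊T⌋₊ : ℝ) + 1) := by exact_mod_cast h
  have h4 := Nat.floor_le hT0
  calc _ ≤ _ := h3
    _ ≤ (3 * T) * (3 * T) := by gcongr <;> linarith
    _ = _ := by ring

lemma E_upper (T : ℝ) (hT : 1 ≤ T) :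
    E (T ^ 4) ≤ 2 * √2 * T * (Gf T - 2 * π / 3 * T ^ 3) + (8 * gg 0 + 9) * T ^ 2 := by
  have hT0 : 0 < T := by linarith
  set V := (finite_qf_lt (T ^ 2)).toFinset with hVd
  have hV : ∀ v, v ∈ V ↔ qf v < T ^ 2 := by
    intro v; rw [hVd, Set.Finite.mem_toFinset]; rfl
  have h1 := S_le T hT V hV
  have h2 := card_le T hT V hV
  have h3 := sum_gg (T ^ 2) (by positivity) V hV
  have hG : Gf T = ∑ v ∈ V, √(T ^ 2 - qf v) := by
    rw [Gf]
    refine tsum_eq_sum fun v hv => ?_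
    rw [hV] at hv
    exact Real.sqrt_eq_zero_of_nonpos (by linarith)
  have hterm : ∀ v, √((T ^ 2) ^ 2 - qf v ^ 2) =
      √2 * T * √(T ^ 2 - qf v) - T ^ 2 * gg (qf v / T ^ 2) := by
    intro v
    have e1 : √((T ^ 2) ^ 2 - qf v ^ 2) = T ^ 2 * √(1 - (qf v / T ^ 2) ^ 2) := by
      rw [show (T ^ 2) ^ 2 - qf v ^ 2 = (T ^ 2) ^ 2 * (1 - (qf v / T ^ 2) ^ 2) by field_simp,
        Real.sqrt_mul (by positivity), Real.sqrt_sq (by positivity)]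
    have e2 : √(T ^ 2 - qf v) = T * √(1 - qf v / T ^ 2) := by
      rw [show T ^ 2 - qf v = T ^ 2 * (1 - qf v / T ^ 2) by field_simp,
        Real.sqrt_mul (by positivity), Real.sqrt_sq (by positivity)]
    rw [e1, e2, gg]
    ring
  have hs : ∑ v ∈ V, (2 * √((T ^ 2) ^ 2 - qf v ^ 2) + 1) =
      2 * √2 * T * Gf T - 2 * T ^ 2 * ∑ v ∈ V, gg (qf v / T ^ 2) + V.card := by
    rw [hG, Finset.mul_sum, Finset.mul_sum, ← Finset.sum_sub_distrib, Finset.sum_add_distrib]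
    simp only [Finset.sum_const, nsmul_eq_mul, mul_one]
    congr 1
    refine Finset.sum_congr rfl fun v _ => ?_
    rw [hterm]; ring
  rw [hs] at h1
  have h4 := mul_le_mul_of_nonneg_left h3 (by positivity : (0 : ℝ) ≤ 2 * T ^ 2)
  unfold E
  nlinarith [h1, h2, h4]

lemma main_neg (C X : ℝ) (h : ∀ x, X < x → -C * x ^ ((1 : ℝ) / 2) ≤ E x) : False := by
  set K := 8 * gg 0 + 9 with hK
  set T0 := max 1 X + 1 with hT0
  have hT1 : 2 ≤ T0 := by linarith [le_max_left 1 X]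
  have hTX : X < T0 := by linarith [le_max_right 1 X]
  refine no_lower (|C| + |K| + 2 * π / 3 * T0 ^ 2) fun T hT => ?_
  unfold hf
  have hpi := Real.pi_pos
  by_cases hTT : T ≤ T0
  · have h1 := Gf_nonneg T
    have h2 : 2 * π / 3 * T ^ 3 ≤ 2 * π / 3 * T0 ^ 2 * T := by
      rw [pow_succ, ← mul_assoc]; gcongr
    have h3 : 0 ≤ (|C| + |K|) * T := by positivity
    linarith
  · push Not at hTT
    have hx : X < T ^ 4 := by
      refine (hTX.trans hTT).trans_le (le_self_pow₀ (by linarith) (by norm_num))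
    have h1 := h _ hx
    have h2 := E_upper T (by linarith)
    have e : (T ^ 4) ^ ((1 : ℝ) / 2) = T ^ 2 := by
      rw [← Real.sqrt_eq_rpow, show T ^ 4 = (T ^ 2) ^ 2 by ring, Real.sqrt_sq (by positivity)]
    rw [e] at h1
    have h3 := h1.trans h2
    rw [← hK] at h3
    set G := Gf T - 2 * π / 3 * T ^ 3 with hG
    have hs : 1 ≤ √2 := Real.one_le_sqrt.2 (by norm_num)
    have hC := le_abs_self C
    have hK' := le_abs_self K
    have h4 : 0 ≤ T * (2 * √2 * G + (|C| + |K|) * T) := by nlinarith [sq_nonneg T]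
    have h5 : 0 ≤ 2 * √2 * G + (|C| + |K|) * T := nonneg_of_mul_nonneg_right h4 hT
    have h6 : 0 ≤ (|C| + |K|) * T := by positivity
    have h7 : 0 ≤ (2 * √2) * (G + (|C| + |K|) * T) := by nlinarith
    have h8 : 0 ≤ G + (|C| + |K|) * T := nonneg_of_mul_nonneg_right h7 (by positivity)
    have h9 : 0 ≤ 2 * π / 3 * T0 ^ 2 * T := by positivity
    linarith

end PartC3

/-- liminf_{x→∞} E(x)/x^{1/2} = −∞: for every real `C` there exist arbitrarily
large `x` with `E(x) < −C·x^{1/2}`. -/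
theorem liminf_E_eq_bot :
    ∀ C : ℝ, ∀ X : ℝ, ∃ x : ℝ, X < x ∧ E x < -C * x ^ ((1 : ℝ) / 2) := by
  intro C X
  by_contra h
  push Not at h
  exact main_neg C X h
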